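/- arXiv:2408.09390 — 7 statements merged into one kernel-verified Lean document; each statement's English description precedes it below -/
import Mathlib

section
/- Let k be a field, let L/k be a finite Galois extension, and let K/k be an arbitrary field extension. Then the tensor product K ⊗_k L is a field if and only if the only intermediate field F of L/k admitting a k-algebra homomorphism F → K is F = k. -/
open scoped TensorProduct

namespace IntermediateField

open Polynomial

/-- An element of a normal intermediate field `A` of `E / F` has the same minimal polynomial over
`F` and over any intermediate field `B` that meets `A` in `F`. -/
theorem map_minpoly_eq_minpoly_of_inf_eq_bot {F E : Type*} [Field F] [Field E] [Algebra F E]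
    {A B : IntermediateField F E} [Normal F A] (h : A ⊓ B = ⊥) (x : A) :
    (minpoly F x).map (algebraMap F B) = minpoly B (x : E) := by
  have hx : IsIntegral F x := Normal.isIntegral ‹_› x
  have hxE : IsIntegral F (x : E) := hx.map A.val
  have hxB : IsIntegral B (x : E) := hxE.tower_top
  have hmin : minpoly F (x : E) = minpoly F x :=
    minpoly.algebraMap_eq (algebraMap A E).injective x
  have hdvd : (minpoly B (x : E)).map (algebraMap B E) ∣
      ((minpoly F x).map (algebraMap F A)).map (algebraMap A E) := by
    have := Polynomial.map_dvd (algebraMap B E) (minpoly.dvd_map_of_isScalarTower F B (x : E))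
    rwa [hmin, Polynomial.map_map, ← IsScalarTower.algebraMap_eq,
      IsScalarTower.algebraMap_eq F A E, ← Polynomial.map_map] at this
  have hsplits : ((minpoly F x).map (algebraMap F A)).Splits := Normal.splits ‹_› x
  have hne : ((minpoly F x).map (algebraMap F A)).map (algebraMap A E) ≠ 0 :=
    ((minpoly.monic hx).map _ |>.map _).ne_zero
  have hA : (minpoly B (x : E)).map (algebraMap B E) ∈ lifts (algebraMap A E) := by
    refine ((hsplits.map _).of_dvd hne hdvd).mem_lift_of_roots_mem_range
      ((minpoly.monic hxB).map _) _ fun a ha ↦ ?_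
    have ha' := Multiset.mem_of_le (roots.le_of_dvd hne hdvd) ha
    rw [hsplits.roots_map] at ha'
    obtain ⟨b, -, rfl⟩ := Multiset.mem_map.1 ha'
    exact ⟨b, rfl⟩
  have hF : minpoly B (x : E) ∈ lifts (algebraMap F B) := by
    refine (lifts_iff_coeff_lifts _).2 fun n ↦ ?_
    obtain ⟨a, ha⟩ := (lifts_iff_coeff_lifts _).1 hA n
    rw [coeff_map] at ha
    have hmem : algebraMap B E ((minpoly B (x : E)).coeff n) ∈ A ⊓ B :=
      ⟨ha ▸ a.2, ((minpoly B (x : E)).coeff n).2⟩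
    rw [h, mem_bot] at hmem
    obtain ⟨c, hc⟩ := hmem
    exact ⟨c, (algebraMap B E).injective (by rw [← hc, ← IsScalarTower.algebraMap_apply])⟩
  obtain ⟨q, hq, -, hqm⟩ := lifts_and_natDegree_eq_and_monic hF (minpoly.monic hxB)
  have hroot : aeval (x : E) q = 0 := by
    rw [← aeval_map_algebraMap B, hq, minpoly.aeval]
  refine (eq_of_monic_of_dvd_of_natDegree_le (minpoly.monic hxB) ((minpoly.monic hx).map _)
    (hmin ▸ minpoly.dvd_map_of_isScalarTower F B (x : E)) ?_)
  rw [← hq, ← hmin]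
  simpa using natDegree_le_of_dvd (minpoly.dvd F _ hroot) hqm.ne_zero

/-- A finite Galois intermediate field `A` of `E / F` is linearly disjoint from every intermediate
field `B` that meets it in `F`; here `B / F` need not be algebraic. -/
theorem linearDisjoint_of_isGalois_of_inf_eq_bot {F E : Type*} [Field F] [Field E] [Algebra F E]
    {A B : IntermediateField F E} [FiniteDimensional F A] [IsGalois F A] (h : A ⊓ B = ⊥) :
    A.LinearDisjoint B := by
  let pb := Field.powerBasisOfFiniteOfSeparable F A
  have hdim : (minpoly B (pb.gen : E)).natDegree = pb.dim := by
    rw [← map_minpoly_eq_minpoly_of_inf_eq_bot h, natDegree_map, pb.natDegree_minpoly]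
  refine LinearDisjoint.of_basis_left pb.basis ?_
  have hli := (linearIndependent_pow (K := B) (pb.gen : E)).comp _ (finCongr hdim.symm).injective
  convert hli using 1
  ext i
  simp

end IntermediateField

/-- Let `k` be a field, `L/k` a finite Galois extension, and `K/k` an arbitrary field
extension. Then the tensor product `K ⊗[k] L` is a field if and only if the only
intermediate field `F` of `L/k` admitting a `k`-algebra homomorphism `F → K` is `F = k`. -/
theorem tensorProduct_isField_iff_no_common_subfield
    (k L K : Type*) [Field k] [Field L] [Field K] [Algebra k L] [Algebra k K]
    [FiniteDimensional k L] [IsGalois k L] :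
    IsField (K ⊗[k] L) ↔
      ∀ F : IntermediateField k L, Nonempty (F →ₐ[k] K) → F = ⊥ := by
  constructor
  · rintro hfield F ⟨g⟩
    let fK : K →ₐ[k] AlgebraicClosure K := IsScalarTower.toAlgHom k K _
    obtain ⟨fL, hfL⟩ : ∃ fL : L →ₐ[k] AlgebraicClosure K, ∀ x : F, fL x = fK (g x) := by
      algebraize [(fK.comp g).toRingHom]
      have : IsScalarTower k F (AlgebraicClosure K) :=
        .of_algebraMap_eq fun c ↦ ((fK.comp g).commutes c).symm
      exact ⟨(IsAlgClosed.lift : L →ₐ[F] AlgebraicClosure K).restrictScalars k,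
        (IsAlgClosed.lift : L →ₐ[F] AlgebraicClosure K).commutes⟩
    have hinf := (IntermediateField.LinearDisjoint.of_isField' hfield fK fL).inf_eq_bot
    refine eq_bot_iff.2 fun x hx ↦ ?_
    have hmem : fL x ∈ fK.fieldRange ⊓ fL.fieldRange := ⟨⟨g ⟨x, hx⟩, (hfL ⟨x, hx⟩).symm⟩, x, rfl⟩
    rw [hinf, IntermediateField.mem_bot] at hmem
    obtain ⟨c, hc⟩ := hmem
    exact IntermediateField.mem_bot.2 ⟨c, fL.injective ((fL.commutes c).trans hc)⟩
  · intro h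
    refine IntermediateField.LinearDisjoint.isField_of_forall k K L fun E _ _ fK fL ↦ ?_
    let e : L ≃ₐ[k] fL.fieldRange := AlgEquiv.ofInjectiveField fL
    have : FiniteDimensional k fL.fieldRange := e.toLinearEquiv.finiteDimensional
    have : IsGalois k fL.fieldRange := IsGalois.of_algEquiv e
    refine (IntermediateField.linearDisjoint_of_isGalois_of_inf_eq_bot ?_).symm
    let F : IntermediateField k L := fK.fieldRange.comap fL
    let toRange : F →ₐ[k] fK.fieldRange :=
      (fL.comp F.val).codRestrict fK.fieldRange.toSubalgebra fun x ↦ x.2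
    have hF : F = ⊥ := h F ⟨(AlgEquiv.ofInjectiveField fK).symm.toAlgHom.comp toRange⟩
    rw [eq_bot_iff]
    rintro _ ⟨⟨x, rfl⟩, hx⟩
    have hxF : x ∈ F := hx
    rw [hF, IntermediateField.mem_bot] at hxF
    obtain ⟨c, rfl⟩ := hxF
    exact IntermediateField.mem_bot.2 ⟨c, (fL.commutes c).symm⟩
end

section
/- Let F ⊆ K be a field extension such that F is separably algebraically closed in K, i.e., every element of K that is algebraic over F with separable minimal polynomial already lies in F. Then for every finite separable field extension E/F, the tensor product K ⊗_F E is a field. -/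
open scoped TensorProduct

open Polynomial

/-- If `F` is separably closed in `K` and `β` is separable over `F`, then the minimal polynomial
of `β` over `F` stays irreducible over `K`. -/
theorem minpoly_eq_map_of_separablyClosedIn
    {F K L : Type*} [Field F] [Field K] [Field L] [Algebra F K] [Algebra F L] [Algebra K L]
    [IsScalarTower F K L] [IsAlgClosed L]
    (hclosed : ∀ x : K, IsSeparable F x → ∃ y : F, algebraMap F K y = x)
    {β : L} (hβ : IsSeparable F β) :
    minpoly K β = (minpoly F β).map (algebraMap F K) := by
  have hF : IsIntegral F β := hβ.isIntegral
  have hK : IsIntegral K β := hF.tower_top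
  have hdvd := minpoly.dvd_map_of_isScalarTower F K β
  have hroots : ∀ a ∈ ((minpoly K β).map (algebraMap K L)).roots,
      a ∈ (algebraMap (separableClosure F L) L).range := fun a ha ↦ by
    have h₀ : aeval a (minpoly K β) = 0 := by
      rw [aeval_def, ← eval_map]
      exact (mem_roots'.mp ha).2
    have h₁ : aeval a (minpoly F β) = 0 := by
      rw [← aeval_map_algebraMap K]
      exact aeval_eq_zero_of_dvd_aeval_eq_zero hdvd h₀
    exact ⟨⟨a, Polynomial.Separable.of_dvd hβ (minpoly.dvd F a h₁)⟩, rfl⟩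
  have hsep : (minpoly K β).map (algebraMap K L) ∈ lifts (algebraMap (separableClosure F L) L) :=
    (IsAlgClosed.splits _).mem_lift_of_roots_mem_range ((minpoly.monic hK).map _) _ hroots
  obtain ⟨q, hq⟩ : minpoly K β ∈ lifts (algebraMap F K) := by
    rw [lifts_iff_coeff_lifts] at hsep ⊢
    intro n
    obtain ⟨⟨s, hs⟩, hsn⟩ := hsep n
    rw [coeff_map] at hsn
    obtain rfl : s = algebraMap K L ((minpoly K β).coeff n) := hsn
    exact hclosed _ (IsSeparable.tower_bot hs)
  replace hq : q.map (algebraMap F K) = minpoly K β := hq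
  have hq₀ : aeval β q = 0 := by
    rw [← aeval_map_algebraMap K, hq, minpoly.aeval]
  refine eq_of_monic_of_associated (minpoly.monic hK) ((minpoly.monic hF).map _)
    (associated_of_dvd_dvd hdvd ?_)
  rw [← hq]
  exact Polynomial.map_dvd _ (minpoly.dvd F β hq₀)

/-- Let `F ⊆ K` be a field extension such that `F` is separably algebraically closed in `K`,
i.e. every element of `K` that is algebraic over `F` with separable minimal polynomial
already lies in `F`. Then for every finite separable field extension `E/F`, the tensor
product `K ⊗[F] E` is a field. -/
theorem tensorProduct_isField_of_separablyClosedIn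
    (F K : Type*) [Field F] [Field K] [Algebra F K]
    (hclosed : ∀ x : K, IsAlgebraic F x → (minpoly F x).Separable →
      ∃ y : F, algebraMap F K y = x) :
    ∀ (E : Type*) [Field E] [Algebra F E], FiniteDimensional F E →
      Algebra.IsSeparable F E → IsField (K ⊗[F] E) := by
  intro E _ _ _ _
  let L := AlgebraicClosure K
  let pb := Field.powerBasisOfFiniteOfSeparable F E
  let σ : E →ₐ[F] L := IsAlgClosed.lift
  let φ : K ⊗[F] E →ₐ[K] L := Algebra.TensorProduct.lift (Algebra.ofId K L) σ fun _ _ ↦ .all _ _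
  have hmin : minpoly F (σ pb.gen) = minpoly F pb.gen := minpoly.algHom_eq σ σ.injective _
  have hsep : IsSeparable F (σ pb.gen) := by
    rw [IsSeparable, hmin]
    exact Algebra.IsSeparable.isSeparable F pb.gen
  have hdeg : (minpoly K (σ pb.gen)).natDegree = pb.dim := by
    rw [minpoly_eq_map_of_separablyClosedIn
      (fun x hx ↦ hclosed x hx.isIntegral.isAlgebraic hx) hsep, natDegree_map, hmin,
      pb.natDegree_minpoly]
  have hφ : Function.Injective φ := by
    refine LinearMap.injective_of_linearIndependent (f := φ.toLinearMap)
      (pb.basis.baseChange K).span_eq ?_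
    have hpow := linearIndependent_pow (K := K) (σ pb.gen)
    rw [hdeg] at hpow
    have hcomp : φ.toLinearMap ∘ pb.basis.baseChange K =
        fun i : Fin pb.dim ↦ σ pb.gen ^ (i : ℕ) := by
      ext i
      simp [φ]
    rw [hcomp]
    exact hpow
  have : IsDomain (K ⊗[F] E) := hφ.isDomain φ.toRingHom
  exact isField_of_isIntegral_of_isField' (Field.toIsField K)
end

section
/- There is a unique 𝔽₂-algebra homomorphism τ : P → P satisfying τ(ε̄₁) = ε̄₁ and τ(ε̄_i) = ε̄_i + ε̄₁^{2i−3} for all 2 ≤ i ≤ s, and this τ is an involution, i.e., τ ∘ τ = id. (Well-definedness uses that (ε̄_i + ε̄₁^{2i−3})^{2^{k_i}} = ε̄_i^{2^{k_i}} + ε̄₁^{(2i−3)·2^{k_i}} and that (2i−3)·2^{k_i} ≥ n.) -/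
open MvPolynomial

set_option synthInstance.maxHeartbeats 1000000
set_option maxHeartbeats 1000000

noncomputable section

/-- The ideal `(ε₁ⁿ, ε₂^{2^{k₂}}, …, ε_s^{2^{k_s}})` of `𝔽₂[ε₁,…,ε_s]`, where
`s = n/2 + 1` and the variable of index `i : Fin (n/2+1)` is `ε_{i+1}`. -/
def relIdealP (n : ℕ) (k : ℕ → ℕ) : Ideal (MvPolynomial (Fin (n / 2 + 1)) (ZMod 2)) :=
  Ideal.span (Set.range fun i : Fin (n / 2 + 1) =>
    X i ^ (if (i : ℕ) = 0 then n else 2 ^ k ((i : ℕ) + 1)))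

/-- `P = 𝔽₂[ε₁,…,ε_s]/(ε₁ⁿ, ε₂^{2^{k₂}}, …, ε_s^{2^{k_s}})` with `s = n/2 + 1`. -/
abbrev P (n : ℕ) (k : ℕ → ℕ) : Type :=
  MvPolynomial (Fin (n / 2 + 1)) (ZMod 2) ⧸ relIdealP n k

/-- `ε̄_{i+1}`, the class in `P` of the variable of index `i`. -/
def eps (n : ℕ) (k : ℕ → ℕ) (i : Fin (n / 2 + 1)) : P n k :=
  Ideal.Quotient.mk _ (X i)

/-- The subalgebra `P^τ` of `τ`-invariant elements. -/
def Pfix (n : ℕ) (k : ℕ → ℕ) (τ : P n k →ₐ[ZMod 2] P n k) : Subalgebra (ZMod 2) (P n k) :=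
  AlgHom.equalizer τ (AlgHom.id (ZMod 2) (P n k))

end

/-- The Frobenius identity `(a + b)^{2^m} = a^{2^m} + b^{2^m}` in any `𝔽₂`-algebra, including the
zero algebra. -/
theorem add_pow_two_pow_of_algebra_zmod_two {A : Type*} [CommRing A] [Algebra (ZMod 2) A]
    (a b : A) (m : ℕ) : (a + b) ^ 2 ^ m = a ^ 2 ^ m + b ^ 2 ^ m := by
  rcases subsingleton_or_nontrivial A with h | h
  · exact Subsingleton.elim _ _
  · have : CharP A 2 := charP_of_injective_algebraMap (algebraMap (ZMod 2) A).injective 2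
    exact add_pow_char_pow a b 2 m

theorem add_self_eq_zero_of_algebra_zmod_two {A : Type*} [CommRing A] [Algebra (ZMod 2) A]
    (a : A) : a + a = 0 := by
  have h : (2 : ZMod 2) • a = 0 := by
    rw [show (2 : ZMod 2) = 0 from rfl, zero_smul]
  simpa [two_smul] using h

theorem eps_pow_eq_zero (n : ℕ) (k : ℕ → ℕ) (i : Fin (n / 2 + 1)) :
    eps n k i ^ (if (i : ℕ) = 0 then n else 2 ^ k ((i : ℕ) + 1)) = 0 := by
  rw [eps, ← map_pow, Ideal.Quotient.eq_zero_iff_mem]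
  exact Ideal.subset_span ⟨i, rfl⟩

theorem algHom_ext_eps {n : ℕ} {k : ℕ → ℕ} {A : Type*} [CommRing A] [Algebra (ZMod 2) A]
    {f g : P n k →ₐ[ZMod 2] A} (h : ∀ i, f (eps n k i) = g (eps n k i)) : f = g :=
  Ideal.Quotient.algHom_ext _ (MvPolynomial.algHom_ext h)

/-- The universal property of `P`: elements satisfying the defining relations are the images of
the generators under an algebra homomorphism. -/
theorem exists_algHom_eps {n : ℕ} {k : ℕ → ℕ} {A : Type*} [CommRing A] [Algebra (ZMod 2) A]
    (x : Fin (n / 2 + 1) → A)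
    (hx : ∀ i, x i ^ (if (i : ℕ) = 0 then n else 2 ^ k ((i : ℕ) + 1)) = 0) :
    ∃ f : P n k →ₐ[ZMod 2] A, ∀ i, f (eps n k i) = x i := by
  have hker : relIdealP n k ≤ RingHom.ker (aeval x : _ →ₐ[ZMod 2] A) := by
    rw [relIdealP, Ideal.span_le]
    rintro _ ⟨i, rfl⟩
    simpa only [SetLike.mem_coe, RingHom.mem_ker, map_pow, aeval_X] using hx i
  refine ⟨Ideal.Quotient.liftₐ _ (aeval x) fun a ha => hker ha, fun i => ?_⟩
  exact aeval_X x i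

/-- Fix `n ≥ 2`, `s = n/2 + 1`, and for `2 ≤ i ≤ s` let `k i` be the unique natural number
with `(2i−3)·2^{k i} ≤ 2n−1 < (2i−3)·2^{k i + 1}`. In
`P = 𝔽₂[ε₁,…,ε_s]/(ε₁ⁿ, ε₂^{2^{k₂}}, …, ε_s^{2^{k_s}})` (the variable of index
`i : Fin (n/2+1)` being `ε_{i+1}`), there is a unique `𝔽₂`-algebra homomorphism
`τ : P → P` with `τ(ε̄₁) = ε̄₁` and `τ(ε̄ᵢ) = ε̄ᵢ + ε̄₁^{2i−3}` for `2 ≤ i ≤ s`,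
and this `τ` is an involution, `τ ∘ τ = id`. -/
theorem exists_unique_involution_tau
    (n : ℕ) (hn : 2 ≤ n) (k : ℕ → ℕ)
    (hk : ∀ i : ℕ, 2 ≤ i → i ≤ n / 2 + 1 →
      (2 * i - 3) * 2 ^ k i ≤ 2 * n - 1 ∧ 2 * n - 1 < (2 * i - 3) * 2 ^ (k i + 1)) :
    (∃! τ : P n k →ₐ[ZMod 2] P n k,
      τ (eps n k 0) = eps n k 0 ∧
      ∀ i : Fin (n / 2 + 1), 1 ≤ (i : ℕ) →
        τ (eps n k i) = eps n k i + eps n k 0 ^ (2 * (i : ℕ) - 1)) ∧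
    ∀ τ : P n k →ₐ[ZMod 2] P n k,
      (τ (eps n k 0) = eps n k 0 ∧
        ∀ i : Fin (n / 2 + 1), 1 ≤ (i : ℕ) →
          τ (eps n k i) = eps n k i + eps n k 0 ^ (2 * (i : ℕ) - 1)) →
      τ.comp τ = AlgHom.id (ZMod 2) (P n k) := by
  have hext : ∀ {f g : P n k →ₐ[ZMod 2] P n k}, f (eps n k 0) = g (eps n k 0) →
      (∀ i : Fin (n / 2 + 1), 1 ≤ (i : ℕ) → f (eps n k i) = g (eps n k i)) → f = g := by
    intro f g h0 h
    refine algHom_ext_eps fun i => ?_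
    rcases Nat.eq_zero_or_pos (i : ℕ) with hi | hi
    · rwa [show i = 0 from Fin.ext hi]
    · exact h i hi
  have h0 : eps n k 0 ^ n = 0 := by simpa using eps_pow_eq_zero n k 0
  constructor
  · obtain ⟨τ, hτ⟩ := exists_algHom_eps (n := n) (k := k)
      (fun i => if (i : ℕ) = 0 then eps n k i else eps n k i + eps n k 0 ^ (2 * (i : ℕ) - 1)) (by
        intro i
        have hi := eps_pow_eq_zero n k i
        split_ifs at hi ⊢ with h
        · exact hi
        · have hlt := (hk (i + 1) (by omega) (by omega)).2
          rw [show 2 * ((i : ℕ) + 1) - 3 = 2 * (i : ℕ) - 1 by omega, pow_succ,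
            ← mul_assoc] at hlt
          rw [add_pow_two_pow_of_algebra_zmod_two, hi, zero_add, ← pow_mul]
          exact pow_eq_zero_of_le (by omega) h0)
    have hτ0 : τ (eps n k 0) = eps n k 0 := by simpa using hτ 0
    have hτi : ∀ i : Fin (n / 2 + 1), 1 ≤ (i : ℕ) →
        τ (eps n k i) = eps n k i + eps n k 0 ^ (2 * (i : ℕ) - 1) := fun i hi => by
      rw [hτ i, if_neg (by omega)]
    exact ⟨τ, ⟨hτ0, hτi⟩, fun σ hσ =>
      hext (hσ.1.trans hτ0.symm) fun i hi => (hσ.2 i hi).trans (hτi i hi).symm⟩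
  · rintro τ ⟨hτ0, hτi⟩
    refine hext ?_ fun i hi => ?_
    · simp [hτ0]
    · simp only [AlgHom.comp_apply, AlgHom.id_apply, hτi i hi, map_add, map_pow, hτ0]
      rw [add_assoc, add_self_eq_zero_of_algebra_zmod_two, add_zero]
end

section
/- For every integer m with 1 ≤ m ≤ n, the map id + τ induces a well-defined additive map P/(ε̄₁^m) → P^τ/(ε̄₁^m), where (ε̄₁^m) denotes the ideal generated by ε̄₁^m in P, respectively in P^τ, and the image of this map equals ε̄₁ · (P^τ/(ε̄₁^m)), the set of all multiples of ε̄₁ in the ring P^τ/(ε̄₁^m). -/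
open MvPolynomial

set_option synthInstance.maxHeartbeats 1000000
set_option maxHeartbeats 1000000

section Involution

variable {R : Type*} [CommRing R] [Algebra (ZMod 2) R]

/-- An `𝔽₂`-algebra has characteristic two. -/
theorem add_self_eq_zero_of_algebra_zmod_two_s7 (a : R) : a + a = 0 := by
  have h : (2 : R) = 0 := by
    rw [← map_ofNat (algebraMap (ZMod 2) R) 2, show (OfNat.ofNat 2 : ZMod 2) = 0 from rfl, map_zero]
  rw [← two_mul, h, zero_mul]

/-- If `τ y = y + e` with `e` fixed by the involution `τ`, then `y ^ 2 = y * (y + e) + e * y`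
shows that `S + S y` is closed under multiplication, `S` being the algebra of invariants. -/
theorem exists_invariant_decomposition_mul {τ : R →ₐ[ZMod 2] R} {e y : R}
    (he : τ e = e) (hy : τ y = y + e) {a b : R}
    (ha : ∃ c d : R, τ c = c ∧ τ d = d ∧ a = c + d * y)
    (hb : ∃ c d : R, τ c = c ∧ τ d = d ∧ b = c + d * y) :
    ∃ c d : R, τ c = c ∧ τ d = d ∧ a * b = c + d * y := by
  obtain ⟨c, d, hc, hd, rfl⟩ := ha
  obtain ⟨c', d', hc', hd', rfl⟩ := hb
  refine ⟨c * c' + d * d' * (y * (y + e)), c * d' + d * c' + d * d' * e, ?_, ?_, ?_⟩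
  · simp only [map_add, map_mul, hc, hd, hc', hd', hy, he]
    linear_combination d * d' * (y + e) * add_self_eq_zero_of_algebra_zmod_two_s7 e
  · simp only [map_add, map_mul, hc, hd, hc', hd', he]
  · linear_combination -d * d' * y * add_self_eq_zero_of_algebra_zmod_two_s7 e

/-- If every element of `R` lies in `S + S y`, where `S` is the algebra of invariants, then
`id + τ` takes values in the multiples of `e` in `S`. -/
theorem add_apply_eq_mul_invariant {τ : R →ₐ[ZMod 2] R} {e y : R} (hy : τ y = y + e)
    (h : ∀ a : R, ∃ c d : R, τ c = c ∧ τ d = d ∧ a = c + d * y) (a : R) :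
    ∃ d : R, τ d = d ∧ a + τ a = e * d := by
  obtain ⟨c, d, hc, hd, rfl⟩ := h a
  refine ⟨d, hd, ?_⟩
  simp only [map_add, map_mul, hc, hd, hy]
  linear_combination add_self_eq_zero_of_algebra_zmod_two_s7 c
    + add_self_eq_zero_of_algebra_zmod_two_s7 (d * y)

/-- If `id + τ` takes values in `e S`, where `S` is the algebra of invariants, and `τ y = y + e`,
then `id + τ` induces an additive map `R / (e ^ m) → S / (e ^ m)` with image `e (S / (e ^ m))`. -/
theorem exists_induced_map_range_eq {τ : R →ₐ[ZMod 2] R} {e y : R} (hy : τ y = y + e)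
    (h : ∀ a : R, ∃ d : R, τ d = d ∧ a + τ a = e * d) (m : ℕ)
    (e' : AlgHom.equalizer τ (AlgHom.id (ZMod 2) R)) (he' : (e' : R) = e) :
    ∃ Φ : (R ⧸ (Ideal.span {e ^ m} : Ideal R)) →+
        (AlgHom.equalizer τ (AlgHom.id (ZMod 2) R) ⧸ Ideal.span {e' ^ m}),
      (∀ (a : R) (u : AlgHom.equalizer τ (AlgHom.id (ZMod 2) R)), (u : R) = a + τ a →
        Φ (Ideal.Quotient.mk (Ideal.span {e ^ m}) a) =
          Ideal.Quotient.mk (Ideal.span {e' ^ m}) u) ∧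
      Set.range Φ =
        Set.range (fun w : AlgHom.equalizer τ (AlgHom.id (ZMod 2) R) ⧸ Ideal.span {e' ^ m} =>
          Ideal.Quotient.mk (Ideal.span {e' ^ m}) e' * w) := by
  have he : τ e = e := he' ▸ e'.2
  have hmem : ∀ a : R, a + τ a ∈ AlgHom.equalizer τ (AlgHom.id (ZMod 2) R) := fun a => by
    obtain ⟨d, hd, had⟩ := h a
    simp [AlgHom.mem_equalizer, had, he, hd]
  let δ : R →+ AlgHom.equalizer τ (AlgHom.id (ZMod 2) R) :=
    { toFun := fun a => ⟨a + τ a, hmem a⟩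
      map_zero' := by ext; simp
      map_add' := fun a b => by ext; simp only [map_add, Subalgebra.coe_add]; ring }
  have hδ : ∀ a, (δ a : R) = a + τ a := fun a => rfl
  let f := (Ideal.Quotient.mk (Ideal.span {e' ^ m})).toAddMonoidHom.comp δ
  have hf : ∀ a ∈ (Ideal.span {e ^ m} : Ideal R).toAddSubgroup, f a = 0 := by
    intro a ha
    obtain ⟨b, rfl⟩ := Ideal.mem_span_singleton'.mp ha
    refine Ideal.Quotient.eq_zero_iff_mem.mpr (Ideal.mem_span_singleton'.mpr ⟨δ b, ?_⟩)
    ext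
    simp only [Subalgebra.coe_mul, Subalgebra.coe_pow, hδ, he', map_mul, map_pow, he]
    ring
  let Φ : (R ⧸ (Ideal.span {e ^ m} : Ideal R)) →+
      (AlgHom.equalizer τ (AlgHom.id (ZMod 2) R) ⧸ Ideal.span {e' ^ m}) :=
    QuotientAddGroup.lift (Ideal.span {e ^ m} : Ideal R).toAddSubgroup f hf
  have hΦ : ∀ (a : R) (u : AlgHom.equalizer τ (AlgHom.id (ZMod 2) R)), (u : R) = a + τ a →
      Φ (Ideal.Quotient.mk (Ideal.span {e ^ m}) a) =
        Ideal.Quotient.mk (Ideal.span {e' ^ m}) u := by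
    intro a u hu
    obtain rfl : u = δ a := Subtype.ext hu
    rfl
  refine ⟨Φ, hΦ, Set.Subset.antisymm ?_ ?_⟩
  · rintro _ ⟨x, rfl⟩
    obtain ⟨a, rfl⟩ := Ideal.Quotient.mk_surjective x
    obtain ⟨d, hd, had⟩ := h a
    refine ⟨Ideal.Quotient.mk _ ⟨d, hd⟩, ?_⟩
    rw [hΦ a (e' * ⟨d, hd⟩) (by simp [he', had])]
    exact (map_mul _ _ _).symm
  · rintro _ ⟨x, rfl⟩
    obtain ⟨u, rfl⟩ := Ideal.Quotient.mk_surjective x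
    refine ⟨Ideal.Quotient.mk _ (u * y), ?_⟩
    have hu : τ u = u := u.2
    rw [hΦ (u * y) (e' * u), map_mul]
    simp only [Subalgebra.coe_mul, he', map_mul, hu, hy]
    linear_combination -add_self_eq_zero_of_algebra_zmod_two_s7 ((u : R) * y)

end Involution

/-- With `y = ε̄₂`, every element of `P` lies in `P^τ + P^τ y`: the generators do, since
`ε̄_{i+1} + ε̄₁^{2i-2} y` is invariant for `i ≥ 1`. -/
theorem exists_invariant_decomposition (n : ℕ) (k : ℕ → ℕ) (τ : P n k →ₐ[ZMod 2] P n k)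
    (hτ0 : τ (eps n k 0) = eps n k 0)
    (hτ : ∀ i : Fin (n / 2 + 1), 1 ≤ (i : ℕ) →
      τ (eps n k i) = eps n k i + eps n k 0 ^ (2 * (i : ℕ) - 1))
    (y : P n k) (hy : τ y = y + eps n k 0) (a : P n k) :
    ∃ c d : P n k, τ c = c ∧ τ d = d ∧ a = c + d * y := by
  obtain ⟨p, rfl⟩ := Ideal.Quotient.mk_surjective a
  induction p using MvPolynomial.induction_on with
  | C r => exact ⟨algebraMap (ZMod 2) _ r, 0, τ.commutes r, map_zero _, by simp; rfl⟩
  | add p q hp hq =>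
    obtain ⟨c, d, hc, hd, hp⟩ := hp
    obtain ⟨c', d', hc', hd', hq⟩ := hq
    refine ⟨c + c', d + d', by rw [map_add, hc, hc'], by rw [map_add, hd, hd'], ?_⟩
    rw [map_add, hp, hq]
    ring
  | mul_X p i hp =>
    rw [map_mul]
    refine exists_invariant_decomposition_mul hτ0 hy hp ?_
    change ∃ c d : P n k, τ c = c ∧ τ d = d ∧ eps n k i = c + d * y
    rcases Nat.eq_zero_or_pos (i : ℕ) with hi | hi
    · obtain rfl : i = 0 := Fin.ext hi
      exact ⟨eps n k 0, 0, hτ0, map_zero _, by simp⟩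
    · refine ⟨eps n k i + eps n k 0 ^ (2 * (i : ℕ) - 2) * y, eps n k 0 ^ (2 * (i : ℕ) - 2),
        ?_, by rw [map_pow, hτ0], ?_⟩
      · have hpow : eps n k 0 ^ (2 * (i : ℕ) - 1)
            = eps n k 0 ^ (2 * (i : ℕ) - 2) * eps n k 0 := by
          rw [← pow_succ]
          congr 1
          omega
        rw [map_add, map_mul, map_pow, hτ0, hy, hτ i hi, hpow]
        linear_combination add_self_eq_zero_of_algebra_zmod_two_s7
          (eps n k 0 ^ (2 * (i : ℕ) - 2) * eps n k 0)
      · linear_combination -add_self_eq_zero_of_algebra_zmod_two_s7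
          (eps n k 0 ^ (2 * (i : ℕ) - 2) * y)

/-- Fix `n ≥ 2`, `s = n/2 + 1`, `k i` as in the context, the algebra
`P = 𝔽₂[ε₁,…,ε_s]/(ε₁ⁿ, ε₂^{2^{k₂}}, …, ε_s^{2^{k_s}})` and the involution `τ` with
`τ(ε̄₁) = ε̄₁`, `τ(ε̄ᵢ) = ε̄ᵢ + ε̄₁^{2i−3}`; `Pfix n k τ` is the invariant subalgebra `P^τ`.
For every `1 ≤ m ≤ n`, the map `id + τ` induces a well-defined additive map
`P/(ε̄₁^m) → P^τ/(ε̄₁^m)` (sending the class of `a` to the class of `a + τ a`), and the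
image of this map equals `ε̄₁ · (P^τ/(ε̄₁^m))`, the set of multiples of `ε̄₁` in
`P^τ/(ε̄₁^m)`. Here `e1 : P^τ` denotes the element with underlying value `ε̄₁`. -/
theorem id_add_tau_induced_map_image
    (n : ℕ) (hn : 2 ≤ n) (k : ℕ → ℕ)
    (hk : ∀ i : ℕ, 2 ≤ i → i ≤ n / 2 + 1 →
      (2 * i - 3) * 2 ^ k i ≤ 2 * n - 1 ∧ 2 * n - 1 < (2 * i - 3) * 2 ^ (k i + 1))
    (τ : P n k →ₐ[ZMod 2] P n k)
    (hτ0 : τ (eps n k 0) = eps n k 0)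
    (hτ : ∀ i : Fin (n / 2 + 1), 1 ≤ (i : ℕ) →
      τ (eps n k i) = eps n k i + eps n k 0 ^ (2 * (i : ℕ) - 1))
    (hτ2 : ∀ a : P n k, τ (τ a) = a)
    (m : ℕ) (hm1 : 1 ≤ m) (hmn : m ≤ n) :
    ∀ e1 : Pfix n k τ, (e1 : P n k) = eps n k 0 →
    ∃ Φ : (P n k ⧸ (Ideal.span {eps n k 0 ^ m} : Ideal (P n k))) →+
        (Pfix n k τ ⧸ (Ideal.span {e1 ^ m} : Ideal (Pfix n k τ))),
      (∀ (a : P n k) (u : Pfix n k τ), (u : P n k) = a + τ a →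
        Φ (Ideal.Quotient.mk (Ideal.span {eps n k 0 ^ m}) a) =
          Ideal.Quotient.mk (Ideal.span {e1 ^ m}) u) ∧
      Set.range Φ =
        Set.range (fun w : Pfix n k τ ⧸ (Ideal.span {e1 ^ m} : Ideal (Pfix n k τ)) =>
          Ideal.Quotient.mk (Ideal.span {e1 ^ m}) e1 * w) := by
  intro e1 he1
  have hy : τ (eps n k ⟨1, by omega⟩) = eps n k ⟨1, by omega⟩ + eps n k 0 := by
    simpa using hτ ⟨1, by omega⟩ le_rfl
  exact exists_induced_map_range_eq hy
    (add_apply_eq_mul_invariant hy (exists_invariant_decomposition n k τ hτ0 hτ _ hy)) m e1 he1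
end

section
/- For every integer m with 1 ≤ m ≤ n, the homomorphism J : P^τ/(ε̄₁^m P^τ) → P/(ε̄₁^m P) induced by the inclusion P^τ ⊆ P is injective on the image of the map id + τ : P/(ε̄₁^m) → P^τ/(ε̄₁^m); that is, if u lies in the image of id + τ and J(u) = 0, then u = 0. -/
open MvPolynomial

set_option synthInstance.maxHeartbeats 1000000
set_option maxHeartbeats 1000000

namespace MvPolynomial

/-- If the `i`-degree of each `f j` is at most that of `X j`, then substituting `f` for the
variables does not raise the `i`-degree. -/
theorem degreeOf_aeval_le {σ R : Type*} [DecidableEq σ] [CommSemiring R]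
    (f : σ → MvPolynomial σ R) (i : σ)
    (hf : ∀ j, degreeOf i (f j) ≤ if j = i then 1 else 0) (p : MvPolynomial σ R) :
    degreeOf i (aeval f p) ≤ degreeOf i p := by
  rw [aeval_def, eval₂_eq]
  refine (degreeOf_sum_le i _ _).trans (Finset.sup_le fun d hd => ?_)
  refine (degreeOf_C_mul_le _ i _).trans <| (degreeOf_prod_le i _ _).trans ?_
  calc ∑ j ∈ d.support, degreeOf i (f j ^ d j)
      ≤ ∑ j ∈ d.support, if j = i then d j else 0 := by
        refine Finset.sum_le_sum fun j _ => (degreeOf_pow_le i _ _).trans ?_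
        have := Nat.mul_le_mul_left (d j) (hf j)
        split_ifs at this ⊢ <;> simpa using this
    _ ≤ d i := by
        rw [Finset.sum_ite_eq']
        split_ifs <;> simp
    _ ≤ degreeOf i p := monomial_le_degreeOf i hd

/-- Modulo an ideal containing `X i ^ q i` for all `i ≠ i₀`, every polynomial has a representative
whose `i`-degree is less than `q i` for all `i ≠ i₀`. -/
theorem exists_sub_mem_degreeOf_lt {σ R : Type*} [CommRing R]
    (I : Ideal (MvPolynomial σ R)) (i₀ : σ) (q : σ → ℕ) (hq : ∀ i, i ≠ i₀ → 0 < q i)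
    (hI : ∀ i, i ≠ i₀ → X i ^ q i ∈ I) (p : MvPolynomial σ R) :
    ∃ r, p - r ∈ I ∧ ∀ i, i ≠ i₀ → degreeOf i r < q i := by
  induction p using MvPolynomial.induction_on' with
  | monomial u a =>
    by_cases hu : ∀ i, i ≠ i₀ → u i < q i
    · refine ⟨monomial u a, by simp, fun i hi => lt_of_le_of_lt ?_ (hu i hi)⟩
      rw [degreeOf_le_iff]
      intro d hd
      rw [Finset.mem_singleton.1 (support_monomial_subset hd)]
    · push Not at hu
      obtain ⟨i, hi, hqi⟩ := hu
      refine ⟨0, ?_, fun j hj => by simpa using hq j hj⟩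
      rw [sub_zero]
      refine Ideal.mem_of_dvd _ ?_ (hI i hi)
      rw [X_pow_eq_monomial, monomial_dvd_monomial]
      exact ⟨Or.inr (by simpa using hqi), one_dvd a⟩
  | add p p' hp hp' =>
    obtain ⟨r, hr, hrd⟩ := hp
    obtain ⟨r', hr', hrd'⟩ := hp'
    refine ⟨r + r', ?_, fun i hi => (degreeOf_add_le i r r').trans_lt
      (max_lt (hrd i hi) (hrd' i hi))⟩
    rw [add_sub_add_comm]
    exact I.add_mem hr hr'

/-- A polynomial of `i`-degree less than `q i` for all `i ≠ i₀` which lies in the ideal generated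
by `X i₀ ^ m` and the `X i ^ q i` is divisible by `X i₀ ^ m`. -/
theorem X_pow_dvd_of_mem_span {σ R : Type*} [CommRing R] (i₀ : σ) (m : ℕ)
    (q : σ → ℕ) (hm : q i₀ = m) (p : MvPolynomial σ R)
    (hp : ∀ i, i ≠ i₀ → degreeOf i p < q i)
    (hmem : p ∈ Ideal.span (Set.range fun i : σ => (X i ^ q i : MvPolynomial σ R))) :
    X i₀ ^ m ∣ p := by
  have hrange : (Set.range fun i : σ => (X i ^ q i : MvPolynomial σ R)) =
      (fun s => monomial s (1 : R)) '' Set.range fun i => Finsupp.single i (q i) := by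
    rw [← Set.range_comp]
    simp only [X_pow_eq_monomial, Function.comp_def]
  rw [hrange, mem_ideal_span_monomial_image] at hmem
  rw [← Ideal.mem_span_singleton, X_pow_eq_monomial,
    ← Set.image_singleton (f := fun s => monomial s (1 : R)), mem_ideal_span_monomial_image]
  intro d hd
  obtain ⟨_, ⟨i, rfl⟩, hi⟩ := hmem d hd
  refine ⟨_, rfl, ?_⟩
  by_cases h : i = i₀
  · subst h
    simpa only [hm] using hi
  · have hle : q i ≤ d i := by simpa using hi
    exact absurd (hle.trans (monomial_le_degreeOf i hd)) (not_le.2 (hp i h))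

end MvPolynomial

/-- The lift of `τ` to the polynomial ring. -/
noncomputable def tauLift (n : ℕ) :
    MvPolynomial (Fin (n / 2 + 1)) (ZMod 2) →ₐ[ZMod 2] MvPolynomial (Fin (n / 2 + 1)) (ZMod 2) :=
  aeval fun i => if i = 0 then X 0 else X i + X 0 ^ (2 * (i : ℕ) - 1)

theorem tauLift_X_zero (n : ℕ) : tauLift n (X 0) = X 0 := by
  simp [tauLift]

theorem tauLift_X_of_ne_zero (n : ℕ) {i : Fin (n / 2 + 1)} (hi : i ≠ 0) :
    tauLift n (X i) = X i + X 0 ^ (2 * (i : ℕ) - 1) := by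
  simp [tauLift, hi]

theorem tauLift_tauLift (n : ℕ) (p : MvPolynomial (Fin (n / 2 + 1)) (ZMod 2)) :
    tauLift n (tauLift n p) = p := by
  suffices h : (tauLift n).comp (tauLift n) = AlgHom.id _ _ from DFunLike.congr_fun h p
  refine algHom_ext fun i => ?_
  by_cases hi : i = 0
  · subst hi
    simp [tauLift_X_zero]
  · simp [tauLift_X_of_ne_zero n hi, tauLift_X_zero, add_assoc, CharTwo.add_self_eq_zero]

theorem degreeOf_tauLift_le (n : ℕ) {i : Fin (n / 2 + 1)} (hi : i ≠ 0)
    (p : MvPolynomial (Fin (n / 2 + 1)) (ZMod 2)) :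
    degreeOf i (tauLift n p) ≤ degreeOf i p := by
  have hX (e : ℕ) : degreeOf i (X 0 ^ e : MvPolynomial (Fin (n / 2 + 1)) (ZMod 2)) = 0 := by
    refine Nat.le_zero.1 ((degreeOf_pow_le i _ _).trans ?_)
    simp [degreeOf_X, hi]
  refine degreeOf_aeval_le _ i (fun j => ?_) p
  by_cases hj : j = 0
  · subst hj
    simpa using (hX 1).le.trans (Nat.zero_le _)
  · rw [if_neg hj]
    refine (degreeOf_add_le i _ _).trans ?_
    rw [hX, degreeOf_X]
    simp [eq_comm]

theorem mk_tauLift (n : ℕ) (k : ℕ → ℕ) (τ : P n k →ₐ[ZMod 2] P n k)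
    (hτ0 : τ (eps n k 0) = eps n k 0)
    (hτ : ∀ i : Fin (n / 2 + 1), 1 ≤ (i : ℕ) →
      τ (eps n k i) = eps n k i + eps n k 0 ^ (2 * (i : ℕ) - 1))
    (p : MvPolynomial (Fin (n / 2 + 1)) (ZMod 2)) :
    Ideal.Quotient.mk (relIdealP n k) (tauLift n p) = τ (Ideal.Quotient.mk (relIdealP n k) p) := by
  suffices h : (Ideal.Quotient.mkₐ (ZMod 2) (relIdealP n k)).comp (tauLift n) =
      τ.comp (Ideal.Quotient.mkₐ (ZMod 2) (relIdealP n k)) from DFunLike.congr_fun h p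
  refine algHom_ext fun i => ?_
  simp only [AlgHom.comp_apply, Ideal.Quotient.mkₐ_eq_mk]
  by_cases hi : i = 0
  · subst hi
    rw [tauLift_X_zero]
    exact hτ0.symm
  · rw [tauLift_X_of_ne_zero n hi, map_add, map_pow]
    exact (hτ i (Nat.one_le_iff_ne_zero.2 fun h => hi (Fin.ext h))).symm

/-- Fix `n ≥ 2`, `s = n/2 + 1`, `k i` as in the context, the algebra
`P = 𝔽₂[ε₁,…,ε_s]/(ε₁ⁿ, ε₂^{2^{k₂}}, …, ε_s^{2^{k_s}})` and the involution `τ` with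
`τ(ε̄₁) = ε̄₁`, `τ(ε̄ᵢ) = ε̄ᵢ + ε̄₁^{2i−3}`; `Pfix n k τ` is the invariant subalgebra `P^τ`.
For every `1 ≤ m ≤ n`, the homomorphism `J : P^τ/(ε̄₁^m P^τ) → P/(ε̄₁^m P)` induced by the
inclusion `P^τ ⊆ P` is injective on the image of the map `id + τ : P/(ε̄₁^m) → P^τ/(ε̄₁^m)`:
if `u` is the class in `P^τ/(ε̄₁^m)` of an element with value `a + τ a` and its image in
`P/(ε̄₁^m)` is `0`, then `u = 0`. Here `e1 : P^τ` denotes the element with value `ε̄₁`. -/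
theorem inclusion_injective_on_image_id_add_tau
    (n : ℕ) (hn : 2 ≤ n) (k : ℕ → ℕ)
    (hk : ∀ i : ℕ, 2 ≤ i → i ≤ n / 2 + 1 →
      (2 * i - 3) * 2 ^ k i ≤ 2 * n - 1 ∧ 2 * n - 1 < (2 * i - 3) * 2 ^ (k i + 1))
    (τ : P n k →ₐ[ZMod 2] P n k)
    (hτ0 : τ (eps n k 0) = eps n k 0)
    (hτ : ∀ i : Fin (n / 2 + 1), 1 ≤ (i : ℕ) →
      τ (eps n k i) = eps n k i + eps n k 0 ^ (2 * (i : ℕ) - 1))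
    (hτ2 : ∀ a : P n k, τ (τ a) = a)
    (m : ℕ) (hm1 : 1 ≤ m) (hmn : m ≤ n) :
    ∀ e1 : Pfix n k τ, (e1 : P n k) = eps n k 0 →
    ∀ (a : P n k) (u : Pfix n k τ), (u : P n k) = a + τ a →
      Ideal.Quotient.mk (Ideal.span {eps n k 0 ^ m} : Ideal (P n k)) (a + τ a) = 0 →
      Ideal.Quotient.mk (Ideal.span {e1 ^ m} : Ideal (Pfix n k τ)) u = 0 := by
  intro e1 he1 a u hu ha
  set q : Fin (n / 2 + 1) → ℕ := fun i => if (i : ℕ) = 0 then m else 2 ^ k ((i : ℕ) + 1) with hq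
  have hqI (i : Fin (n / 2 + 1)) (hi : i ≠ 0) : X i ^ q i ∈ relIdealP n k :=
    Ideal.subset_span ⟨i, by simp [hq, hi]⟩
  have hI : relIdealP n k ≤ Ideal.span (Set.range fun i => X i ^ q i) := by
    refine Ideal.span_le.2 ?_
    rintro _ ⟨i, rfl⟩
    refine Ideal.mem_of_dvd _ (pow_dvd_pow _ ?_) (Ideal.subset_span ⟨i, rfl⟩)
    simp only [hq]
    split_ifs
    exacts [hmn, le_rfl]
  obtain ⟨p, rfl⟩ := Ideal.Quotient.mk_surjective a
  obtain ⟨r, hpr, hr⟩ := exists_sub_mem_degreeOf_lt (relIdealP n k) 0 q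
    (fun i hi => by simp [hq, hi]) hqI p
  rw [Ideal.Quotient.eq.2 hpr, ← mk_tauLift n k τ hτ0 hτ, ← map_add] at hu ha
  -- The reduced representative of `a + τ a` is divisible by `X 0 ^ m` in the polynomial ring.
  have hmem : r + tauLift n r ∈ Ideal.span (Set.range fun i => X i ^ q i) := by
    rw [Ideal.Quotient.eq_zero_iff_mem, Ideal.mem_span_singleton'] at ha
    obtain ⟨c, hc⟩ := ha
    obtain ⟨c, rfl⟩ := Ideal.Quotient.mk_surjective c
    rw [eps, ← map_pow, ← map_mul, eq_comm, Ideal.Quotient.eq] at hc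
    rw [← sub_add_cancel (r + tauLift n r) (c * X 0 ^ m)]
    exact Ideal.add_mem _ (hI hc) (Ideal.mul_mem_left _ _ (Ideal.subset_span ⟨0, by simp [hq]⟩))
  obtain ⟨b, hb⟩ := X_pow_dvd_of_mem_span 0 m q (by simp [hq]) (r + tauLift n r)
    (fun i hi => (degreeOf_add_le i _ _).trans_lt
      (max_lt (hr i hi) ((degreeOf_tauLift_le n hi r).trans_lt (hr i hi)))) hmem
  have hfix : tauLift n b = b := by
    have h : X 0 ^ m * tauLift n b = X 0 ^ m * b := by
      calc X 0 ^ m * tauLift n b = tauLift n (X 0 ^ m * b) := by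
            rw [map_mul, map_pow, tauLift_X_zero]
        _ = X 0 ^ m * b := by rw [← hb, map_add, tauLift_tauLift, add_comm r]
    exact mul_left_cancel₀ (pow_ne_zero m (X_ne_zero 0)) h
  have hbτ : Ideal.Quotient.mk (relIdealP n k) b ∈ Pfix n k τ := by
    rw [Pfix, AlgHom.mem_equalizer, ← mk_tauLift n k τ hτ0 hτ, hfix, AlgHom.id_apply]
  rw [Ideal.Quotient.eq_zero_iff_mem, Ideal.mem_span_singleton]
  refine ⟨⟨_, hbτ⟩, Subtype.ext ?_⟩
  rw [hu, hb, map_mul, map_pow, MulMemClass.coe_mul, SubmonoidClass.coe_pow, he1, eps]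
end

section
/- For every integer m with 1 ≤ m ≤ n there is an isomorphism of 𝔽₂-algebras P^τ/(ε̄₁^m) ≅ 𝔽₂[e₁, …, e_s, x]/(e₁^m, e₁·x, x², h₂, h₃, …, h_s), where (ε̄₁^m) denotes the ideal of P^τ generated by ε̄₁^m, h₂ = e₁^{2^{k₂}−n}·x + Σ_{j=0}^{k₂−1} e₁^{2^{k₂}−2^{j+1}}·e₂^{2^j}, and h_i = e_i^{2^{k_i}} + e₁^{(2i−3)·2^{k_i}−n}·x + e₁^{(2i−4)·2^{k_i}}·(Σ_{j=0}^{k_i−1} e₁^{2^{k_i}−2^{j+1}}·e₂^{2^j}) for 3 ≤ i ≤ s. The isomorphism is given by e₁ ↦ ε̄₁, e₂ ↦ ε̄₂² + ε̄₁ε̄₂, e_i ↦ ε̄_i + ε̄₁^{2i−4}ε̄₂ for 3 ≤ i ≤ s, and x ↦ ε̄₁^{n−1}ε̄₂. (All exponents occurring are non-negative since 2^{k₂} ≥ n and (2i−3)·2^{k_i} ≥ n.) -/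
open MvPolynomial

set_option synthInstance.maxHeartbeats 1000000
set_option maxHeartbeats 1000000

noncomputable section

/-- The sum `Σ_{j=0}^{K−1} e₁^{2^K − 2^{j+1}}·e₂^{2^j}` in `𝔽₂[e₁,…,e_s,x]`, where the
variable of index `c < s` is `e_{c+1}` and the last variable (index `s = n/2+1`) is `x`. -/
def sumTermC (n : ℕ) (K : ℕ) : MvPolynomial (Fin (n / 2 + 2)) (ZMod 2) :=
  ∑ j ∈ Finset.range K, X 0 ^ (2 ^ K - 2 ^ (j + 1)) * X 1 ^ 2 ^ j

/-- The relation `h_i = e_i^{2^{k_i}} + e₁^{(2i−3)·2^{k_i}−n}·x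
+ e₁^{(2i−4)·2^{k_i}}·(Σ_{j=0}^{k_i−1} e₁^{2^{k_i}−2^{j+1}}·e₂^{2^j})` for `3 ≤ i ≤ s`
(and `0` for `i` out of range). -/
def hrelC (n : ℕ) (k : ℕ → ℕ) (i : ℕ) : MvPolynomial (Fin (n / 2 + 2)) (ZMod 2) :=
  if h : 3 ≤ i ∧ i ≤ n / 2 + 1 then
    X ⟨i - 1, by omega⟩ ^ 2 ^ k i
      + X 0 ^ ((2 * i - 3) * 2 ^ k i - n) * X ⟨n / 2 + 1, by omega⟩
      + X 0 ^ ((2 * i - 4) * 2 ^ k i) * sumTermC n (k i)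
  else 0

/-- The ideal `(e₁^m, e₁·x, x², h₂, h₃, …, h_s)` of `𝔽₂[e₁,…,e_s,x]`, where
`h₂ = e₁^{2^{k₂}−n}·x + Σ_{j=0}^{k₂−1} e₁^{2^{k₂}−2^{j+1}}·e₂^{2^j}`. -/
def relIdealC (n m : ℕ) (k : ℕ → ℕ) : Ideal (MvPolynomial (Fin (n / 2 + 2)) (ZMod 2)) :=
  Ideal.span
    ({X 0 ^ m,
      X 0 * X ⟨n / 2 + 1, by omega⟩,
      X ⟨n / 2 + 1, by omega⟩ ^ 2,
      X 0 ^ (2 ^ k 2 - n) * X ⟨n / 2 + 1, by omega⟩ + sumTermC n (k 2)} ∪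
      Set.range (hrelC n k))

end

section CharTwo

variable {R : Type*} [CommRing R]

theorem add_pow_two_pow_of_two_eq_zero (h2 : (2 : R) = 0) (a b : R) (K : ℕ) :
    (a + b) ^ 2 ^ K = a ^ 2 ^ K + b ^ 2 ^ K := by
  induction K with
  | zero => simp
  | succ K ih =>
    rw [pow_succ, pow_mul, ih, pow_mul, pow_mul]
    linear_combination (a ^ 2 ^ K * b ^ 2 ^ K) * h2

theorem pow_two_pow_eq_artinSchreier_sum (h2 : (2 : R) = 0) (t y : R) (K : ℕ) :
    y ^ 2 ^ K = t ^ (2 ^ K - 1) * y +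
      ∑ j ∈ Finset.range K, t ^ (2 ^ K - 2 ^ (j + 1)) * (y ^ 2 + t * y) ^ 2 ^ j := by
  induction K with
  | zero => simp
  | succ K ih =>
    have hsq : ∀ (f : ℕ → R) (N : ℕ),
        (∑ j ∈ Finset.range N, f j) ^ 2 = ∑ j ∈ Finset.range N, f j ^ 2 := by
      intro f N
      induction N with
      | zero => simp
      | succ N ihN =>
        rw [Finset.sum_range_succ, Finset.sum_range_succ, ← ihN]
        linear_combination ((∑ j ∈ Finset.range N, f j) * f N) * h2
    have hpos : 1 ≤ 2 ^ K := Nat.one_le_two_pow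
    have hterm : ∀ j ∈ Finset.range K,
        t ^ (2 ^ (K + 1) - 2 ^ (j + 1 + 1)) * (y ^ 2 + t * y) ^ 2 ^ (j + 1) =
          (t ^ (2 ^ K - 2 ^ (j + 1)) * (y ^ 2 + t * y) ^ 2 ^ j) ^ 2 := by
      intro j _
      rw [mul_pow, ← pow_mul, ← pow_mul, ← pow_succ, Nat.sub_mul, ← pow_succ, ← pow_succ]
    rw [Finset.sum_range_succ', Finset.sum_congr rfl hterm, ← hsq,
      pow_succ 2 K, pow_mul y, ih]
    have e1 : t ^ (2 ^ K * 2 - 1) = (t ^ (2 ^ K - 1)) ^ 2 * t := by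
      rw [← pow_mul, ← pow_succ t]; congr 1; omega
    have e2 : t ^ (2 ^ K * 2 - 2 ^ (0 + 1)) = (t ^ (2 ^ K - 1)) ^ 2 := by
      rw [← pow_mul, zero_add, pow_one]; congr 1; omega
    rw [e1, e2]
    generalize (∑ j ∈ Finset.range K, t ^ (2 ^ K - 2 ^ (j + 1)) * (y ^ 2 + t * y) ^ 2 ^ j) = S
    linear_combination (t ^ (2 ^ K - 1) * y * S - (t ^ (2 ^ K - 1)) ^ 2 * t * y) * h2

end CharTwo

section Spanning

variable {K A : Type*} [Field K] [CommRing A] [Algebra K A]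

theorem span_pow_mul_eq_top {J : Type*} {n : ℕ} {t : A} (ht : t ^ n = 0) (v : J → A)
    (hv : Submodule.span K (Set.range v) ⊔ (Ideal.span {t}).restrictScalars K = ⊤) :
    Submodule.span K (Set.range fun a : Fin n × J => t ^ (a.1 : ℕ) * v a.2) = ⊤ := by
  set W := Submodule.span K (Set.range fun a : Fin n × J => t ^ (a.1 : ℕ) * v a.2)
  have key : ∀ i ≤ n, ∀ p : A, t ^ (n - i) * p ∈ W := by
    intro i
    induction i with
    | zero => intro _ p; simp [ht]
    | succ i ih =>
      intro hi p
      have hp : p ∈ Submodule.span K (Set.range v) ⊔ (Ideal.span {t}).restrictScalars K := by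
        rw [hv]; trivial
      obtain ⟨w, hw, r, hr, rfl⟩ := Submodule.mem_sup.1 hp
      obtain ⟨r, rfl⟩ := Ideal.mem_span_singleton.1 (Submodule.restrictScalars_mem K _ _ |>.1 hr)
      rw [mul_add]
      refine W.add_mem ?_ ?_
      · induction hw using Submodule.span_induction with
        | mem x hx =>
          obtain ⟨j, rfl⟩ := hx
          exact Submodule.subset_span ⟨(⟨n - (i + 1), by omega⟩, j), rfl⟩
        | zero => simp
        | add x y _ _ hx hy =>
          rw [mul_add]
          refine W.add_mem (hx ?_) (hy ?_) <;> simp [hv]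
        | smul c x _ hx =>
          rw [mul_smul_comm]
          exact W.smul_mem _ (hx (by simp [hv]))
      · rw [← mul_assoc, ← pow_succ, show n - (i + 1) + 1 = n - i by omega]
        exact ih (by omega) r
  rw [eq_top_iff]
  intro p _
  simpa using key n le_rfl p

theorem eq_top_of_prod_pow_mem {σ : Type*} [Fintype σ] (π : MvPolynomial σ K →ₐ[K] A)
    (hπ : Function.Surjective π) (W : Submodule K A)
    (h : ∀ e : σ →₀ ℕ, ∏ i, π (X i) ^ e i ∈ W) : W = ⊤ := by
  rw [eq_top_iff]
  intro p _
  obtain ⟨f, rfl⟩ := hπ p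
  induction f using MvPolynomial.induction_on' with
  | monomial e c =>
    rw [monomial_eq, map_mul, ← algebraMap_eq, AlgHom.commutes, ← Algebra.smul_def,
      Finsupp.prod_fintype _ _ (by simp), map_prod]
    simpa using W.smul_mem c (h e)
  | add p q hp hq => rw [map_add]; exact W.add_mem (hp trivial) (hq trivial)

theorem injective_of_span_eq_top_of_linearIndependent {ι M N : Type*} [Fintype ι]
    [AddCommGroup M] [Module K M] [AddCommGroup N] [Module K N] (f : M →ₗ[K] N) (u : ι → M)
    (hu : Submodule.span K (Set.range u) = ⊤) (hf : LinearIndependent K (f ∘ u)) :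
    Function.Injective f := by
  rw [injective_iff_map_eq_zero]
  intro p hp
  have hp' : p ∈ Submodule.span K (Set.range u) := by rw [hu]; trivial
  obtain ⟨c, rfl⟩ := (Submodule.mem_span_range_iff_exists_fun K).1 hp'
  have hc := Fintype.linearIndependent_iff.1 hf c (by simpa using hp)
  simp [hc]

theorem linearIndependent_of_span_eq_top_of_linearIndependent {ι M : Type*} [Fintype ι]
    [AddCommGroup M] [Module K M] {u v : ι → M} (hu : LinearIndependent K u)
    (hv : Submodule.span K (Set.range v) = ⊤) : LinearIndependent K v := by
  have : Module.Finite K M := ⟨⟨(Set.finite_range v).toFinset, by simpa using hv⟩⟩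
  refine linearIndependent_of_top_le_span_of_card_eq_finrank hv.ge (le_antisymm ?_ ?_)
  · exact hu.fintype_card_le_finrank
  · rw [← finrank_top K M, ← hv]; exact finrank_range_le_card v

end Spanning

section Invariants

variable {K A B : Type*} [Field K] [CommRing A] [Algebra K A]

theorem mem_span_of_map_eq_self [Fintype B] {n : ℕ} (hn : 1 ≤ n) {t y : A} {m : B → A}
    (ht : t ^ n = 0)
    (τ : A →ₐ[K] A) (hτt : τ t = t) (hτy : τ y = y + t) (hτm : ∀ β, τ (m β) = m β)
    (hli : LinearIndependent K
      fun a : Fin n × (B × Fin 2) => t ^ (a.1 : ℕ) * (y ^ (a.2.2 : ℕ) * m a.2.1))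
    (hsp : Submodule.span K (Set.range
      fun a : Fin n × (B × Fin 2) => t ^ (a.1 : ℕ) * (y ^ (a.2.2 : ℕ) * m a.2.1)) = ⊤)
    {w : A} (hw : τ w = w) :
    w ∈ Submodule.span K (Set.range (Sum.elim
      (fun a : Fin n × B => t ^ (a.1 : ℕ) * m a.2) (fun β : B => t ^ (n - 1) * y * m β))) := by
  obtain ⟨N, rfl⟩ : ∃ N, n = N + 1 := ⟨n - 1, by omega⟩
  have hw' : w ∈ Submodule.span K (Set.range
      fun a : Fin (N + 1) × (B × Fin 2) => t ^ (a.1 : ℕ) * (y ^ (a.2.2 : ℕ) * m a.2.1)) := by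
    rw [hsp]; trivial
  obtain ⟨c, rfl⟩ := (Submodule.mem_span_range_iff_exists_fun K).1 hw'
  have h0 : ∑ a : Fin N × B, c (a.1.castSucc, (a.2, 1)) • (t ^ (a.1.succ : ℕ) * m a.2) = 0 := by
    rw [← sub_eq_zero, map_sum, ← Finset.sum_sub_distrib] at hw
    simp only [Fintype.sum_prod_type, Fin.sum_univ_two, Fin.sum_univ_castSucc (n := N)] at hw
    simp only [map_smul, map_mul, map_pow, hτt, hτy, hτm, ← smul_sub] at hw
    rw [Fintype.sum_prod_type, ← hw]
    have hlast : ∀ β : B, t ^ N * ((y + t) * m β) - t ^ N * (y * m β) = 0 := by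
      intro β; linear_combination m β * ht
    simp [hlast]
    refine Finset.sum_congr rfl fun i _ => Finset.sum_congr rfl fun β _ => ?_
    congr 1
    ring
  have hsub : LinearIndependent K fun a : Fin N × B => t ^ (a.1.succ : ℕ) * m a.2 := by
    have := hli.comp (fun a : Fin N × B => (a.1.succ, (a.2, (0 : Fin 2)))) (by
      rintro ⟨a, β⟩ ⟨a', β'⟩ h
      simpa using h)
    simpa [Function.comp_def] using this
  have hc := Fintype.linearIndependent_iff.1 hsub _ h0
  refine Submodule.sum_mem _ ?_
  rintro ⟨a, β, δ⟩ _
  fin_cases δ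
  · refine Submodule.smul_mem _ _ (Submodule.subset_span ⟨Sum.inl (a, β), ?_⟩)
    simp
  · refine Fin.lastCases ?_ (fun a => ?_) a
    · refine Submodule.smul_mem _ _ (Submodule.subset_span ⟨Sum.inr β, ?_⟩)
      simp [mul_assoc]
    · have := hc (a, β)
      simp at this
      simp [this]

theorem linearIndependent_sum_elim_of_pow_mul {n : ℕ} (hn : 1 ≤ n) {t y : A} {m : B → A}
    (hli : LinearIndependent K
      fun a : Fin n × (B × Fin 2) => t ^ (a.1 : ℕ) * (y ^ (a.2.2 : ℕ) * m a.2.1)) :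
    LinearIndependent K (Sum.elim
      (fun a : Fin n × B => t ^ (a.1 : ℕ) * m a.2) (fun β : B => t ^ (n - 1) * y * m β)) := by
  have := hli.comp (Sum.elim (fun a : Fin n × B => (a.1, (a.2, (0 : Fin 2))))
    (fun β : B => (⟨n - 1, by omega⟩, (β, (1 : Fin 2))))) (by
      rintro (⟨a, β⟩ | β) (⟨a', β'⟩ | β') h <;> simp_all)
  convert this using 1
  ext (a | β) <;> simp [mul_assoc]

/-- If `A / (t, x)` is spanned by `m`, with `t x = x² = 0` and `tⁿ = 0`, then `A` is spanned by
the elements `tᵃ m` and `x m`. -/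
theorem span_sum_elim_eq_top {n : ℕ} {t x : A} {m : B → A} (ht : t ^ n = 0)
    (htx : t * x = 0) (hx : x ^ 2 = 0)
    (h : Submodule.span K (Set.range m) ⊔ (Ideal.span {t, x}).restrictScalars K = ⊤) :
    Submodule.span K (Set.range (Sum.elim
      (fun a : Fin n × B => t ^ (a.1 : ℕ) * m a.2) (fun β : B => x * m β))) = ⊤ := by
  have hdec : ∀ p : A, ∃ w ∈ Submodule.span K (Set.range m), ∃ r r', p = w + (r * t + r' * x) := by
    intro p
    have hp : p ∈ Submodule.span K (Set.range m) ⊔ (Ideal.span {t, x}).restrictScalars K := by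
      rw [h]; trivial
    obtain ⟨w, hw, r, hr, rfl⟩ := Submodule.mem_sup.1 hp
    obtain ⟨a, b, rfl⟩ := Ideal.mem_span_pair.1 (Submodule.restrictScalars_mem K _ _ |>.1 hr)
    exact ⟨w, hw, a, b, rfl⟩
  have hxmul : ∀ w ∈ Submodule.span K (Set.range m),
      x * w ∈ Submodule.span K (Set.range fun β => x * m β) := by
    intro w hw
    have := Submodule.mem_map_of_mem (f := LinearMap.mulLeft K x) hw
    rw [Submodule.map_span, ← Set.range_comp] at this
    simpa [Function.comp_def] using this
  have hv := span_pow_mul_eq_top (K := K) ht (Sum.elim m fun β => x * m β) (by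
    rw [eq_top_iff]
    intro p _
    obtain ⟨w, hw, r, r', rfl⟩ := hdec p
    obtain ⟨w', hw', s, s', rfl⟩ := hdec r'
    rw [Set.Sum.elim_range, Submodule.span_union]
    refine Submodule.mem_sup.2 ⟨w + x * w', Submodule.add_mem_sup hw (hxmul _ hw'), r * t,
      Ideal.mem_span_singleton'.2 ⟨r, rfl⟩, ?_⟩
    linear_combination -s * htx - s' * hx)
  rw [eq_top_iff, ← hv, Submodule.span_le]
  rintro _ ⟨⟨a, β | β⟩, rfl⟩
  · exact Submodule.subset_span ⟨Sum.inl (a, β), rfl⟩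
  · by_cases ha : (a : ℕ) = 0
    · exact Submodule.subset_span ⟨Sum.inr β, by simp [ha]⟩
    · obtain ⟨b, hb⟩ := Nat.exists_eq_succ_of_ne_zero ha
      have : t ^ (a : ℕ) * (x * m β) = 0 := by
        rw [hb, pow_succ]; linear_combination t ^ b * m β * htx
      simp [this]

end Invariants

noncomputable section

/-- The exponent bounds of the monomials in `e₂, …, e_s` which form a basis of `P^τ` modulo
`ε̄₁` and `ε̄₁ⁿ⁻¹ε̄₂`; the bound `1` in degree `0` excludes `e₁`. -/
def invBound (n : ℕ) (k : ℕ → ℕ) (i : Fin (n / 2 + 1)) : ℕ :=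
  if i = 0 then 1 else if i = 1 then 2 ^ (k 2 - 1) else 2 ^ k ((i : ℕ) + 1)

/-- The images in `P` of the generators `e₁, …, e_s`. -/
def invGen (n : ℕ) (k : ℕ → ℕ) (i : Fin (n / 2 + 1)) : P n k :=
  if i = 0 then eps n k 0
  else if i = 1 then eps n k 1 ^ 2 + eps n k 0 * eps n k 1
  else eps n k i + eps n k 0 ^ (2 * (i : ℕ) - 2) * eps n k 1

/-- The exponent vector of `ε₁ᵃ ε₂^{2β₁+δ} ∏_{i ≥ 3} ε_i^{β_{i-1}}`. -/
def splitExp {r : ℕ} (a δ : ℕ) (β : Fin (r + 1) → ℕ) (i : Fin (r + 1)) : ℕ :=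
  if i = 0 then a else if i = 1 then 2 * β 1 + δ else β i

end

section Exponents

variable {r : ℕ}

theorem Fin.val_one_of_one_le (hr : 1 ≤ r) : ((1 : Fin (r + 1)) : ℕ) = 1 := by
  rw [Fin.val_one', Nat.mod_eq_of_lt (by omega)]

theorem Fin.one_ne_zero_of_one_le (hr : 1 ≤ r) : (1 : Fin (r + 1)) ≠ 0 := by
  intro h
  have := Fin.val_one_of_one_le hr
  simp [h] at this

theorem prod_pow_splitExp (hr : 1 ≤ r) {A : Type*} [CommRing A] (ε : Fin (r + 1) → A)
    (a δ : ℕ) (β : Fin (r + 1) → ℕ) (hβ : β 0 = 0) :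
    ∏ i, ε i ^ splitExp a δ β i =
      ε 0 ^ a * (ε 1 ^ δ * ∏ i, (if i = 1 then ε 1 ^ 2 else ε i) ^ β i) := by
  have h10 := Fin.one_ne_zero_of_one_le hr
  have h0 : ε 0 ^ a = ∏ i, if i = 0 then ε i ^ a else 1 := by simp
  have h1 : ε 1 ^ δ = ∏ i, if i = 1 then ε i ^ δ else 1 := by simp
  rw [h0, h1, ← Finset.prod_mul_distrib, ← Finset.prod_mul_distrib]
  refine Finset.prod_congr rfl fun i _ => ?_
  by_cases hi0 : i = 0
  · subst hi0; simp [splitExp, h10.symm, hβ]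
  · by_cases hi1 : i = 1
    · subst hi1; simp [splitExp, h10]; ring
    · simp [splitExp, hi0, hi1]

end Exponents

section Concrete

variable {n : ℕ} {k : ℕ → ℕ}

theorem two_eq_zero_P : (2 : P n k) = 0 := by
  have := map_ofNat (algebraMap (ZMod 2) (P n k)) 2
  rw [← this, show (OfNat.ofNat 2 : ZMod 2) = 0 from rfl, map_zero]

theorem eps_zero_pow : eps n k 0 ^ n = 0 := by
  rw [eps, ← map_pow, Ideal.Quotient.eq_zero_iff_mem]
  exact Ideal.subset_span ⟨0, by simp⟩

theorem eps_pow {i : Fin (n / 2 + 1)} (hi : i ≠ 0) : eps n k i ^ 2 ^ k ((i : ℕ) + 1) = 0 := by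
  rw [eps, ← map_pow, Ideal.Quotient.eq_zero_iff_mem]
  exact Ideal.subset_span ⟨i, by simp [hi]⟩

theorem mem_relIdealP_iff (f : MvPolynomial (Fin (n / 2 + 1)) (ZMod 2)) :
    f ∈ relIdealP n k ↔ ∀ e ∈ f.support, ∃ i : Fin (n / 2 + 1),
      (if (i : ℕ) = 0 then n else 2 ^ k ((i : ℕ) + 1)) ≤ e i := by
  have : relIdealP n k = Ideal.span ((fun e => monomial e (1 : ZMod 2)) '' Set.range
      fun i : Fin (n / 2 + 1) =>
        Finsupp.single i (if (i : ℕ) = 0 then n else 2 ^ k ((i : ℕ) + 1))) := by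
    rw [relIdealP, ← Set.range_comp]
    congr 2
    ext1 i
    exact X_pow_eq_monomial
  rw [this, mem_ideal_span_monomial_image]
  simp [Finsupp.single_le_iff]

theorem two_mul_two_pow_pred (hk2 : 1 ≤ k 2) : 2 ^ k 2 = 2 * 2 ^ (k 2 - 1) := by
  rw [← pow_succ', Nat.sub_add_cancel hk2]

theorem coe_zero_eq_zero (β : ∀ i, Fin (invBound n k i)) : (β 0 : ℕ) = 0 := by
  have := (β 0).2
  simp [invBound] at this
  simpa using this

theorem linearIndependent_eps (hn : 2 ≤ n) (hk2 : 1 ≤ k 2) :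
    LinearIndependent (ZMod 2)
      fun a : Fin n × ((∀ i, Fin (invBound n k i)) × Fin 2) =>
        ∏ i, eps n k i ^ splitExp a.1 a.2.2 (fun i => (a.2.1 i : ℕ)) i := by
  have hr : 1 ≤ n / 2 := by omega
  have h10 := Fin.one_ne_zero_of_one_le hr
  set E : Fin n × ((∀ i, Fin (invBound n k i)) × Fin 2) → (Fin (n / 2 + 1) →₀ ℕ) :=
    fun a => Finsupp.equivFunOnFinite.symm (splitExp a.1 a.2.2 (fun i => (a.2.1 i : ℕ))) with hE
  have hinj : Function.Injective E := by
    rintro ⟨a, β, δ⟩ ⟨a', β', δ'⟩ h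
    have h' : ∀ i, splitExp a δ (fun i => (β i : ℕ)) i =
        splitExp a' δ' (fun i => (β' i : ℕ)) i := fun i => DFunLike.congr_fun h i
    have h0 := h' 0
    have h1 := h' 1
    simp only [splitExp, if_true, h10, if_false] at h0 h1
    have hβ : β = β' := by
      ext i
      by_cases hi0 : i = 0
      · subst hi0; rw [coe_zero_eq_zero, coe_zero_eq_zero]
      by_cases hi1 : i = 1
      · subst hi1; omega
      · simpa [splitExp, hi0, hi1] using h' i
    subst hβ
    simp only [Prod.mk.injEq, Fin.ext_iff, true_and]
    omega
  have hlt : ∀ a i, E a i < if (i : ℕ) = 0 then n else 2 ^ k ((i : ℕ) + 1) := by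
    rintro ⟨a, β, δ⟩ i
    have hβ := (β i).2
    simp only [hE, Finsupp.equivFunOnFinite_symm_apply_apply, splitExp]
    by_cases hi0 : i = 0
    · subst hi0; simp
    by_cases hi1 : i = 1
    · subst hi1
      simp [invBound, h10] at hβ
      have := two_mul_two_pow_pred hk2
      simp only [h10, if_false, if_true, Fin.val_one_of_one_le hr, one_ne_zero]
      norm_num
      omega
    · simpa [hi0, hi1, invBound] using hβ
  have hmon : ∀ a : Fin n × ((∀ i, Fin (invBound n k i)) × Fin 2),
      ∏ i, eps n k i ^ splitExp a.1 a.2.2 (fun i => (a.2.1 i : ℕ)) i =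
        Ideal.Quotient.mkₐ (ZMod 2) (relIdealP n k) (monomial (E a) 1) := by
    intro a
    rw [monomial_eq, Finsupp.prod_fintype _ _ (by simp)]
    simp [hE, eps]
  simp only [hmon]
  rw [Fintype.linearIndependent_iff]
  intro c hc a
  simp only [← map_smul, ← map_sum] at hc
  rw [Ideal.Quotient.mkₐ_eq_mk, Ideal.Quotient.eq_zero_iff_mem, mem_relIdealP_iff] at hc
  by_contra hca
  obtain ⟨i, hi⟩ := hc (E a) (by
    classical
    simp [coeff_sum, coeff_monomial, hinj.eq_iff, hca])
  exact absurd (hlt a i) (not_lt.2 hi)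

/-- The family `ε̄₁ᵃ ε̄₂^δ ∏ e_i^{β_i}`. -/
noncomputable def invFamily (n : ℕ) (k : ℕ → ℕ)
    (a : Fin n × ((∀ i, Fin (invBound n k i)) × Fin 2)) : P n k :=
  eps n k 0 ^ (a.1 : ℕ) * (eps n k 1 ^ (a.2.2 : ℕ) * ∏ i, invGen n k i ^ (a.2.1 i : ℕ))

theorem eps_zero_dvd_prod_sub (β : Fin (n / 2 + 1) → ℕ) (hn : 2 ≤ n) :
    eps n k 0 ∣ ∏ i, (if i = 1 then eps n k 1 ^ 2 else eps n k i) ^ β i -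
      ∏ i, invGen n k i ^ β i := by
  rw [← Ideal.mem_span_singleton, ← Ideal.Quotient.eq, map_prod, map_prod]
  refine Finset.prod_congr rfl fun i _ => ?_
  rw [map_pow, map_pow]
  congr 1
  rw [Ideal.Quotient.eq, Ideal.mem_span_singleton]
  have h10 := Fin.one_ne_zero_of_one_le (show 1 ≤ n / 2 by omega)
  by_cases hi0 : i = 0
  · subst hi0; simp [invGen, h10.symm]
  by_cases hi1 : i = 1
  · subst hi1
    refine ⟨-eps n k 1, ?_⟩
    simp only [invGen, h10, if_false, if_true]
    ring
  · have : (i : ℕ) ≠ 0 := fun h => hi0 (Fin.ext h)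
    have h1 : (i : ℕ) ≠ 1 := fun h => hi1 (by
      ext; rw [h, Fin.val_one_of_one_le (show 1 ≤ n / 2 by omega)])
    obtain ⟨c, hc⟩ := dvd_pow_self (eps n k 0) (show 2 * (i : ℕ) - 2 ≠ 0 by omega)
    refine ⟨-c * eps n k 1, ?_⟩
    simp only [invGen, hi0, hi1, if_false]
    linear_combination -eps n k 1 * hc

theorem span_invFamily (hn : 2 ≤ n) (hk2 : 1 ≤ k 2) :
    Submodule.span (ZMod 2) (Set.range (invFamily n k)) = ⊤ := by
  have hr : 1 ≤ n / 2 := by omega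
  have h10 := Fin.one_ne_zero_of_one_le hr
  refine span_pow_mul_eq_top (J := (∀ i, Fin (invBound n k i)) × Fin 2) eps_zero_pow
    (fun b => eps n k 1 ^ (b.2 : ℕ) * ∏ i, invGen n k i ^ (b.1 i : ℕ)) ?_
  refine eq_top_of_prod_pow_mem (Ideal.Quotient.mkₐ (ZMod 2) (relIdealP n k))
    (Ideal.Quotient.mkₐ_surjective _ _) _ fun e => ?_
  change ∏ i, eps n k i ^ e i ∈ _
  by_cases h0 : e 0 = 0
  swap
  · refine Submodule.mem_sup_right (Ideal.mem_span_singleton.2 ?_)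
    exact (dvd_pow_self _ h0).trans (Finset.dvd_prod_of_mem _ (Finset.mem_univ 0))
  by_cases hbig : ∃ i : Fin (n / 2 + 1), i ≠ 0 ∧ 2 ^ k ((i : ℕ) + 1) ≤ e i
  · obtain ⟨i, hi, hle⟩ := hbig
    have hzero : eps n k i ^ e i = 0 := pow_eq_zero_of_le hle (eps_pow hi)
    rw [Finset.prod_eq_zero (Finset.mem_univ i) hzero]
    exact zero_mem _
  push Not at hbig
  set β : Fin (n / 2 + 1) → ℕ := fun i => if i = 1 then e 1 / 2 else e i with hβ
  have hβlt : ∀ i, β i < invBound n k i := by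
    intro i
    by_cases hi0 : i = 0
    · subst hi0; simp [hβ, invBound, h10.symm, h0]
    by_cases hi1 : i = 1
    · subst hi1
      have := hbig 1 h10
      rw [Fin.val_one_of_one_le hr, two_mul_two_pow_pred hk2] at this
      simp [hβ, invBound, h10]
      omega
    · simpa [hβ, invBound, hi0, hi1] using hbig i hi0
  have hprod : ∏ i, eps n k i ^ e i =
      eps n k 1 ^ (e 1 % 2) * ∏ i, (if i = 1 then eps n k 1 ^ 2 else eps n k i) ^ β i := by
    have := prod_pow_splitExp hr (eps n k) 0 (e 1 % 2) β (by simp [hβ, h10.symm, h0])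
    rw [pow_zero, one_mul] at this
    rw [← this]
    refine Finset.prod_congr rfl fun i _ => ?_
    congr 1
    by_cases hi0 : i = 0
    · subst hi0; simp [splitExp, h0]
    by_cases hi1 : i = 1
    · subst hi1; simp [splitExp, hβ, h10]; omega
    · simp [splitExp, hβ, hi0, hi1]
  rw [hprod]
  refine Submodule.mem_sup.2 ⟨_, Submodule.subset_span
    ⟨(fun i => ⟨β i, hβlt i⟩, ⟨e 1 % 2, by omega⟩), rfl⟩, _, ?_, add_sub_cancel _ _⟩
  rw [Submodule.restrictScalars_mem, Ideal.mem_span_singleton, ← mul_sub]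
  exact Dvd.dvd.mul_left (eps_zero_dvd_prod_sub β hn) _

theorem linearIndependent_invFamily (hn : 2 ≤ n) (hk2 : 1 ≤ k 2) :
    LinearIndependent (ZMod 2) (invFamily n k) :=
  linearIndependent_of_span_eq_top_of_linearIndependent (linearIndependent_eps hn hk2)
    (span_invFamily hn hk2)


/-- The algebra map `𝔽₂[e₁, …, e_s, x] → P` whose image is `P^τ`. -/
noncomputable def presMap (n : ℕ) (k : ℕ → ℕ) :
    MvPolynomial (Fin (n / 2 + 2)) (ZMod 2) →ₐ[ZMod 2] P n k :=
  aeval (Fin.snoc (α := fun _ => P n k) (invGen n k) (eps n k 0 ^ (n - 1) * eps n k 1))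

theorem presMap_castSucc (i : Fin (n / 2 + 1)) :
    presMap n k (X i.castSucc) = invGen n k i := by
  simp only [presMap, aeval_X, Fin.snoc_castSucc]

theorem presMap_last :
    presMap n k (X ⟨n / 2 + 1, by omega⟩) = eps n k 0 ^ (n - 1) * eps n k 1 := by
  rw [presMap, aeval_X]
  exact Fin.snoc_last (α := fun _ => P n k) _ _

theorem presMap_zero : presMap n k (X 0) = eps n k 0 := by
  rw [← Fin.castSucc_zero, presMap_castSucc, invGen, if_pos rfl]

theorem castSucc_one_of_two_le (hn : 2 ≤ n) :
    (1 : Fin (n / 2 + 1)).castSucc = (1 : Fin (n / 2 + 2)) := by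
  ext
  rw [Fin.val_castSucc, Fin.val_one_of_one_le (by omega), Fin.val_one_of_one_le (by omega)]

theorem presMap_one (hn : 2 ≤ n) :
    presMap n k (X 1) = eps n k 1 ^ 2 + eps n k 0 * eps n k 1 := by
  rw [← castSucc_one_of_two_le hn, presMap_castSucc, invGen,
    if_neg (Fin.one_ne_zero_of_one_le (by omega)), if_pos rfl]

theorem presMap_of_two_le {c : ℕ} (hc2 : 2 ≤ c) (hc : c ≤ n / 2) :
    presMap n k (X ⟨c, by omega⟩) =
      eps n k ⟨c, by omega⟩ + eps n k 0 ^ (2 * c - 2) * eps n k 1 := by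
  have := presMap_castSucc (n := n) (k := k) ⟨c, by omega⟩
  rw [invGen, if_neg, if_neg] at this
  · exact this
  · rw [Fin.ext_iff, Fin.val_one_of_one_le (by omega)]
    simp only; omega
  · rw [Fin.ext_iff]
    simp only [Fin.val_zero]; omega

theorem presMap_sumTermC (hn : 2 ≤ n) (K : ℕ) :
    presMap n k (sumTermC n K) =
      eps n k 1 ^ 2 ^ K - eps n k 0 ^ (2 ^ K - 1) * eps n k 1 := by
  rw [pow_two_pow_eq_artinSchreier_sum two_eq_zero_P (eps n k 0), add_sub_cancel_left]
  simp [sumTermC, presMap_zero, presMap_one hn]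

theorem relIdealC_le_ker_presMap (hn : 2 ≤ n)
    (hN : ∀ i : ℕ, 2 ≤ i → i ≤ n / 2 + 1 → n ≤ (2 * i - 3) * 2 ^ k i) :
    relIdealC n n k ≤ RingHom.ker (presMap n k) := by
  have h2 := two_eq_zero_P (n := n) (k := k)
  have ht := eps_zero_pow (n := n) (k := k)
  have hpow : ∀ M, n ≤ M → eps n k 0 ^ (M - n) * (eps n k 0 ^ (n - 1) * eps n k 1) =
      eps n k 0 ^ (M - 1) * eps n k 1 := by
    intro M hM
    rw [← mul_assoc, ← pow_add]; congr 2; omega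
  rw [relIdealC, Ideal.span_le]
  rintro f ((rfl | rfl | rfl | rfl) | ⟨i, rfl⟩) <;>
    rw [SetLike.mem_coe, RingHom.mem_ker]
  · rw [map_pow, presMap_zero, ht]
  · rw [map_mul, presMap_zero, presMap_last, ← mul_assoc, ← pow_succ',
      Nat.sub_add_cancel (by omega), ht, zero_mul]
  · rw [map_pow, presMap_last, mul_pow, ← pow_mul, pow_eq_zero_of_le _ ht, zero_mul]
    omega
  · have hn2 := hN 2 le_rfl (by omega)
    have hy := eps_pow (k := k) (Fin.one_ne_zero_of_one_le (show 1 ≤ n / 2 by omega))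
    rw [Fin.val_one_of_one_le (by omega)] at hy
    rw [map_add, map_mul, map_pow, presMap_zero, presMap_last, presMap_sumTermC hn,
      hpow _ (by simpa using hn2), hy]
    ring
  · rw [hrelC]
    split_ifs with h
    swap
    · exact map_zero _
    have hz := eps_pow (n := n) (k := k) (i := ⟨i - 1, by omega⟩)
      (by rw [ne_eq, Fin.ext_iff, Fin.val_zero]; simp only; omega)
    simp only [Nat.sub_add_cancel (show 1 ≤ i by omega)] at hz
    rw [map_add, map_add, map_mul, map_mul, map_pow, map_pow, map_pow, presMap_zero, presMap_last,
      presMap_sumTermC hn, hpow _ (hN i (by omega) h.2),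
      presMap_of_two_le (show 2 ≤ i - 1 by omega) (by omega),
      add_pow_two_pow_of_two_eq_zero h2, hz]
    have e1 : 2 * (i - 1) - 2 = 2 * i - 4 := by omega
    have hpos : 1 ≤ 2 ^ k i := Nat.one_le_two_pow
    have e2 : (2 * i - 3) * 2 ^ k i - 1 = (2 * i - 4) * 2 ^ k i + (2 ^ k i - 1) := by
      rw [show 2 * i - 3 = 2 * i - 4 + 1 by omega, add_mul]; omega
    rw [e1, e2, mul_pow, ← pow_mul, pow_add]
    linear_combination eps n k 0 ^ ((2 * i - 4) * 2 ^ k i) * eps n k 1 ^ 2 ^ k i * h2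

/-- The class of `∏ e_i^{β_i}`. -/
noncomputable def presMonomial (n : ℕ) (k : ℕ → ℕ) (β : ∀ i, Fin (invBound n k i)) :
    MvPolynomial (Fin (n / 2 + 2)) (ZMod 2) ⧸ relIdealC n n k :=
  ∏ i : Fin (n / 2 + 1), Ideal.Quotient.mk _ (X i.castSucc) ^ (β i : ℕ)

theorem span_presMonomial_sup (hn : 2 ≤ n) (hk2 : 1 ≤ k 2) :
    Submodule.span (ZMod 2) (Set.range (presMonomial n k)) ⊔
      (Ideal.span {Ideal.Quotient.mk (relIdealC n n k) (X 0),
        Ideal.Quotient.mk (relIdealC n n k) (X ⟨n / 2 + 1, by omega⟩)}).restrictScalars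
          (ZMod 2) = ⊤ := by
  have hr : 1 ≤ n / 2 := by omega
  have h10 := Fin.one_ne_zero_of_one_le hr
  set q := Ideal.Quotient.mk (relIdealC n n k)
  set I := Ideal.span {q (X 0), q (X ⟨n / 2 + 1, by omega⟩)}
  have h0I : q (X 0) ∈ I := Ideal.subset_span (by simp)
  have hxI : q (X ⟨n / 2 + 1, by omega⟩) ∈ I := Ideal.subset_span (by simp)
  have hrel : ∀ f ∈ relIdealC n n k, q f = 0 := fun f hf => Ideal.Quotient.eq_zero_iff_mem.2 hf
  have hpowI : ∀ N ≠ 0, q (X 0) ^ N ∈ I := fun N hN => Ideal.pow_mem_of_mem _ h0I _ (by omega)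
  have h1 : q (X 1) ^ 2 ^ (k 2 - 1) ∈ I := by
    have := hrel (X 0 ^ (2 ^ k 2 - n) * X ⟨n / 2 + 1, by omega⟩ + sumTermC n (k 2))
      (Ideal.subset_span (Or.inl (by simp)))
    rw [sumTermC, ← Nat.sub_add_cancel hk2, Finset.sum_range_succ, map_add, map_add,
      Nat.sub_add_cancel hk2, Nat.sub_self, pow_zero, one_mul, map_pow, ← add_assoc] at this
    rw [eq_neg_of_add_eq_zero_right this]
    refine I.neg_mem (I.add_mem ?_ ?_)
    · rw [map_mul]; exact I.mul_mem_left _ hxI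
    · rw [map_sum]
      refine I.sum_mem fun j hj => ?_
      rw [map_mul, map_pow]
      refine I.mul_mem_right _ (hpowI _ ?_)
      have : 2 ^ (j + 1) < 2 ^ k 2 :=
        Nat.pow_lt_pow_right (by norm_num) (by have := Finset.mem_range.1 hj; omega)
      omega
  have hi : ∀ i : Fin (n / 2 + 1), i ≠ 0 → q (X i.castSucc) ^ invBound n k i ∈ I := by
    intro i hi0
    rw [invBound, if_neg hi0]
    split_ifs with hi1
    · rw [hi1, castSucc_one_of_two_le hn]; exact h1
    have hv0 : (i : ℕ) ≠ 0 := fun h => hi0 (Fin.ext h)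
    have hv1 : (i : ℕ) ≠ 1 := fun h => hi1 (by ext; rw [h, Fin.val_one_of_one_le hr])
    have := hrel (hrelC n k (i + 1)) (Ideal.subset_span (Or.inr ⟨_, rfl⟩))
    rw [hrelC, dif_pos (by omega), map_add, map_add, add_assoc, map_pow] at this
    change q (X i.castSucc) ^ 2 ^ k (i + 1) + _ = 0 at this
    rw [eq_neg_of_add_eq_zero_left this]
    refine I.neg_mem (I.add_mem ?_ ?_)
    · rw [map_mul]; exact I.mul_mem_left _ hxI
    · rw [map_mul, map_pow]
      exact I.mul_mem_right _ (hpowI _ (mul_ne_zero (by omega) (by positivity)))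
  refine eq_top_of_prod_pow_mem (Ideal.Quotient.mkₐ (ZMod 2) (relIdealC n n k))
    (Ideal.Quotient.mkₐ_surjective _ _) _ fun e => ?_
  change ∏ i, q (X i) ^ e i ∈ _
  by_cases hx : e (Fin.last _) = 0
  swap
  · refine Submodule.mem_sup_right (I.mem_of_dvd
      (Finset.dvd_prod_of_mem _ (Finset.mem_univ (Fin.last _))) ?_)
    exact Ideal.pow_mem_of_mem _ hxI _ (by omega)
  by_cases h0 : e 0 = 0
  swap
  · exact Submodule.mem_sup_right (I.mem_of_dvd
      (Finset.dvd_prod_of_mem _ (Finset.mem_univ 0)) (hpowI _ h0))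
  by_cases hbig : ∃ i : Fin (n / 2 + 1), i ≠ 0 ∧ invBound n k i ≤ e i.castSucc
  · obtain ⟨i, hi0, hle⟩ := hbig
    exact Submodule.mem_sup_right (I.mem_of_dvd
      ((pow_dvd_pow _ hle).trans (Finset.dvd_prod_of_mem (fun i => q (X i) ^ e i)
        (Finset.mem_univ i.castSucc))) (hi i hi0))
  push Not at hbig
  refine Submodule.mem_sup_left (Submodule.subset_span
    ⟨fun i => ⟨e i.castSucc, ?_⟩, ?_⟩)
  · by_cases hi0 : i = 0
    · subst hi0; simp [invBound, h0]
    · exact hbig i hi0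
  · rw [Fin.prod_univ_castSucc, hx, pow_zero, mul_one]
    rfl

theorem ker_presMap (hn : 2 ≤ n) (hk2 : 1 ≤ k 2)
    (hN : ∀ i : ℕ, 2 ≤ i → i ≤ n / 2 + 1 → n ≤ (2 * i - 3) * 2 ^ k i) :
    RingHom.ker (presMap n k) = relIdealC n n k := by
  have hle := relIdealC_le_ker_presMap hn hN
  refine le_antisymm (fun f hf => ?_) hle
  have hrel : ∀ f ∈ relIdealC n n k, Ideal.Quotient.mk (relIdealC n n k) f = 0 :=
    fun f hf => Ideal.Quotient.eq_zero_iff_mem.2 hf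
  have hsp := span_sum_elim_eq_top (K := ZMod 2) (n := n)
    (t := Ideal.Quotient.mk (relIdealC n n k) (X 0))
    (x := Ideal.Quotient.mk (relIdealC n n k) (X ⟨n / 2 + 1, by omega⟩))
    (by rw [← map_pow]; exact hrel _ (Ideal.subset_span (Or.inl (by simp))))
    (by rw [← map_mul]; exact hrel _ (Ideal.subset_span (Or.inl (by simp))))
    (by rw [← map_pow]; exact hrel _ (Ideal.subset_span (Or.inl (by simp))))
    (span_presMonomial_sup hn hk2)
  have hli := linearIndependent_sum_elim_of_pow_mul (K := ZMod 2) (n := n) (by omega)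
    (t := eps n k 0) (y := eps n k 1)
    (m := fun β : ∀ i, Fin (invBound n k i) => ∏ i, invGen n k i ^ (β i : ℕ))
    (linearIndependent_invFamily hn hk2)
  set Φ := Ideal.Quotient.liftₐ (relIdealC n n k) (presMap n k) hle
  have hΦ : ∀ f, Φ (Ideal.Quotient.mk _ f) = presMap n k f := fun f => rfl
  have hΦm : ∀ β, Φ (presMonomial n k β) = ∏ i, invGen n k i ^ (β i : ℕ) := by
    intro β
    simp only [presMonomial, map_prod, map_pow, hΦ, presMap_castSucc]
  have hinj := injective_of_span_eq_top_of_linearIndependent Φ.toLinearMap _ hsp (by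
    convert hli using 1
    swap
    · rfl
    funext b
    rcases b with a | β
    · simp only [Function.comp_apply, Sum.elim_inl, AlgHom.toLinearMap_apply, map_mul, map_pow,
        hΦ, hΦm, presMap_zero]
    · simp only [Function.comp_apply, Sum.elim_inr, AlgHom.toLinearMap_apply, map_mul,
        hΦ, hΦm, presMap_last])
  rw [← Ideal.Quotient.eq_zero_iff_mem]
  apply hinj
  rw [map_zero]
  exact hf

theorem range_presMap (hn : 2 ≤ n) (hk2 : 1 ≤ k 2) (τ : P n k →ₐ[ZMod 2] P n k)
    (hτ0 : τ (eps n k 0) = eps n k 0)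
    (hτ : ∀ i : Fin (n / 2 + 1), 1 ≤ (i : ℕ) →
      τ (eps n k i) = eps n k i + eps n k 0 ^ (2 * (i : ℕ) - 1)) :
    (presMap n k).range = Pfix n k τ := by
  have hr : 1 ≤ n / 2 := by omega
  have h2 := two_eq_zero_P (n := n) (k := k)
  have ht := eps_zero_pow (n := n) (k := k)
  have hτ1 : τ (eps n k 1) = eps n k 1 + eps n k 0 := by
    rw [hτ 1 (Fin.val_one_of_one_le hr).ge, Fin.val_one_of_one_le hr]; simp
  have hgen : ∀ i, τ (invGen n k i) = invGen n k i := by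
    intro i
    rw [invGen]
    split_ifs with hi0 hi1
    · exact hτ0
    · rw [map_add, map_mul, map_pow, hτ1, hτ0]
      linear_combination (eps n k 0 * eps n k 1 + eps n k 0 ^ 2) * h2
    · have hv0 : (i : ℕ) ≠ 0 := fun h => hi0 (Fin.ext h)
      have hv1 : (i : ℕ) ≠ 1 := fun h => hi1 (by ext; rw [h, Fin.val_one_of_one_le hr])
      rw [map_add, map_mul, map_pow, hτ1, hτ0, hτ i (by omega),
        show 2 * (i : ℕ) - 1 = 2 * (i : ℕ) - 2 + 1 by omega, pow_succ]
      linear_combination (eps n k 0 ^ (2 * (i : ℕ) - 2) * eps n k 0) * h2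
  have hx : τ (eps n k 0 ^ (n - 1) * eps n k 1) = eps n k 0 ^ (n - 1) * eps n k 1 := by
    rw [map_mul, map_pow, hτ1, hτ0, mul_add, ← pow_succ, Nat.sub_add_cancel (by omega), ht,
      add_zero]
  apply le_antisymm
  · have : τ.comp (presMap n k) = presMap n k := by
      apply MvPolynomial.algHom_ext
      intro i
      refine Fin.lastCases ?_ (fun i => ?_) i
      · exact (congrArg τ presMap_last).trans (hx.trans presMap_last.symm)
      · rw [AlgHom.comp_apply, presMap_castSucc, hgen]
    rintro _ ⟨f, rfl⟩
    exact DFunLike.congr_fun this f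
  · intro w hw
    have := mem_span_of_map_eq_self (by omega) ht τ hτ0 hτ1
      (m := fun β : ∀ i, Fin (invBound n k i) => ∏ i, invGen n k i ^ (β i : ℕ))
      (fun β => by simp [hgen]) (linearIndependent_invFamily hn hk2) (span_invFamily hn hk2) hw
    refine (Submodule.span_le (p := Subalgebra.toSubmodule (presMap n k).range)).2 ?_ this
    have ht' : eps n k 0 ∈ (presMap n k).range := ⟨X 0, presMap_zero⟩
    have hx' : eps n k 0 ^ (n - 1) * eps n k 1 ∈ (presMap n k).range := ⟨_, presMap_last⟩
    have hm' : ∀ β : ∀ i, Fin (invBound n k i),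
        ∏ i, invGen n k i ^ (β i : ℕ) ∈ (presMap n k).range := fun β =>
      Subalgebra.prod_mem _ fun i _ => Subalgebra.pow_mem _
        ((presMap n k).mem_range.2 ⟨X i.castSucc, presMap_castSucc i⟩) _
    rintro _ ⟨a | β, rfl⟩
    · exact Subalgebra.mul_mem _ (Subalgebra.pow_mem _ ht' _) (hm' _)
    · exact Subalgebra.mul_mem _ hx' (hm' _)

theorem relIdealC_eq_sup (m : ℕ) (hmn : m ≤ n) :
    relIdealC n m k = Ideal.span {X 0 ^ m} ⊔ relIdealC n n k := by
  apply le_antisymm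
  · rw [relIdealC, Ideal.span_le]
    rintro f ((rfl | hf) | hf)
    · exact Ideal.mem_sup_left (Ideal.mem_span_singleton_self _)
    · exact Ideal.mem_sup_right (Ideal.subset_span (Or.inl (Or.inr hf)))
    · exact Ideal.mem_sup_right (Ideal.subset_span (Or.inr hf))
  · refine sup_le ?_ ?_
    · rw [Ideal.span_le, Set.singleton_subset_iff]
      exact Ideal.subset_span (Or.inl (Or.inl rfl))
    · rw [relIdealC, Ideal.span_le]
      rintro f ((rfl | hf) | hf)
      · exact Ideal.mem_of_dvd _ (pow_dvd_pow _ hmn) (Ideal.subset_span (Or.inl (Or.inl rfl)))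
      · exact Ideal.subset_span (Or.inl (Or.inr hf))
      · exact Ideal.subset_span (Or.inr hf)

end Concrete

/-- Fix `n ≥ 2`, `s = n/2 + 1`, `k i` as in the context, the algebra
`P = 𝔽₂[ε₁,…,ε_s]/(ε₁ⁿ, ε₂^{2^{k₂}}, …, ε_s^{2^{k_s}})` and the involution `τ` with
`τ(ε̄₁) = ε̄₁`, `τ(ε̄ᵢ) = ε̄ᵢ + ε̄₁^{2i−3}`; `Pfix n k τ` is the invariant subalgebra `P^τ`.
For every `1 ≤ m ≤ n` there is an isomorphism of `𝔽₂`-algebras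
`𝔽₂[e₁,…,e_s,x]/(e₁^m, e₁·x, x², h₂, h₃, …, h_s) ≅ P^τ/(ε̄₁^m)` sending `e₁ ↦ ε̄₁`,
`e₂ ↦ ε̄₂² + ε̄₁ε̄₂`, `e_i ↦ ε̄_i + ε̄₁^{2i−4}ε̄₂` (`3 ≤ i ≤ s`), and `x ↦ ε̄₁^{n−1}ε̄₂`.
Here `e1 : P^τ` denotes the element with underlying value `ε̄₁`. -/
theorem invariant_subalgebra_quotient_presentation
    (n : ℕ) (hn : 2 ≤ n) (k : ℕ → ℕ)
    (hk : ∀ i : ℕ, 2 ≤ i → i ≤ n / 2 + 1 →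
      (2 * i - 3) * 2 ^ k i ≤ 2 * n - 1 ∧ 2 * n - 1 < (2 * i - 3) * 2 ^ (k i + 1))
    (τ : P n k →ₐ[ZMod 2] P n k)
    (hτ0 : τ (eps n k 0) = eps n k 0)
    (hτ : ∀ i : Fin (n / 2 + 1), 1 ≤ (i : ℕ) →
      τ (eps n k i) = eps n k i + eps n k 0 ^ (2 * (i : ℕ) - 1))
    (m : ℕ) (hm1 : 1 ≤ m) (hmn : m ≤ n) :
    ∀ e1 : Pfix n k τ, (e1 : P n k) = eps n k 0 →
    ∃ iso : (MvPolynomial (Fin (n / 2 + 2)) (ZMod 2) ⧸ relIdealC n m k) ≃ₐ[ZMod 2]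
        (Pfix n k τ ⧸ (Ideal.span {e1 ^ m} : Ideal (Pfix n k τ))),
      (iso (Ideal.Quotient.mk (relIdealC n m k) (X 0)) =
        Ideal.Quotient.mk (Ideal.span {e1 ^ m}) e1) ∧
      (∀ u : Pfix n k τ, (u : P n k) = eps n k 1 ^ 2 + eps n k 0 * eps n k 1 →
        iso (Ideal.Quotient.mk (relIdealC n m k) (X 1)) =
          Ideal.Quotient.mk (Ideal.span {e1 ^ m}) u) ∧
      (∀ c : Fin (n / 2 + 2), 2 ≤ (c : ℕ) → (hc : (c : ℕ) ≤ n / 2) →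
        ∀ u : Pfix n k τ,
          (u : P n k) = eps n k ⟨(c : ℕ), by omega⟩
              + eps n k 0 ^ (2 * (c : ℕ) - 2) * eps n k 1 →
          iso (Ideal.Quotient.mk (relIdealC n m k) (X c)) =
            Ideal.Quotient.mk (Ideal.span {e1 ^ m}) u) ∧
      (∀ u : Pfix n k τ, (u : P n k) = eps n k 0 ^ (n - 1) * eps n k 1 →
        iso (Ideal.Quotient.mk (relIdealC n m k) (X ⟨n / 2 + 1, by omega⟩)) =
          Ideal.Quotient.mk (Ideal.span {e1 ^ m}) u) := by
  intro e1 he1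
  have hN : ∀ i : ℕ, 2 ≤ i → i ≤ n / 2 + 1 → n ≤ (2 * i - 3) * 2 ^ k i := by
    intro i h1 h2
    have := (hk i h1 h2).2
    rw [pow_succ, ← mul_assoc] at this
    omega
  have hk2 : 1 ≤ k 2 := by
    by_contra h
    have := hN 2 le_rfl (by omega)
    rw [show k 2 = 0 by omega] at this
    omega
  have hrange := range_presMap hn hk2 τ hτ0 hτ
  have hmem : ∀ f, presMap n k f ∈ Pfix n k τ := fun f => hrange ▸ ⟨f, rfl⟩
  set ψ := (presMap n k).codRestrict (Pfix n k τ) hmem with hψ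
  have hψsurj : Function.Surjective ψ := by
    rintro ⟨w, hw⟩
    obtain ⟨f, rfl⟩ := hrange.ge hw
    exact ⟨f, rfl⟩
  have hψker : RingHom.ker ψ = relIdealC n n k := by
    rw [← ker_presMap hn hk2 hN]
    ext f
    simp [hψ, RingHom.mem_ker, Subtype.ext_iff]
  have hψ0 : ψ (X 0) = e1 := Subtype.ext (presMap_zero.trans he1.symm)
  let χ := (Ideal.Quotient.mkₐ (ZMod 2) (Ideal.span {e1 ^ m})).comp ψ
  have hχsurj : Function.Surjective χ :=
    (Ideal.Quotient.mkₐ_surjective (ZMod 2) (Ideal.span {e1 ^ m})).comp hψsurj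
  have hχker : relIdealC n m k = RingHom.ker χ := by
    have hmap : Ideal.span {e1 ^ m} = Ideal.map ψ (Ideal.span {X 0 ^ m}) := by
      rw [Ideal.map_span, Set.image_singleton, map_pow, hψ0]
    rw [relIdealC_eq_sup m hmn, ← hψker]
    ext f
    rw [RingHom.mem_ker, AlgHom.comp_apply, Ideal.Quotient.mkₐ_eq_mk,
      Ideal.Quotient.eq_zero_iff_mem, hmap, ← Ideal.mem_comap,
      Ideal.comap_map_of_surjective _ hψsurj]
    rfl
  let iso := (Ideal.quotientEquivAlgOfEq (ZMod 2) hχker).trans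
    (Ideal.quotientKerAlgEquivOfSurjective hχsurj)
  have hiso : ∀ (f : MvPolynomial (Fin (n / 2 + 2)) (ZMod 2)) (u : Pfix n k τ),
      (u : P n k) = presMap n k f →
      iso (Ideal.Quotient.mk _ f) = Ideal.Quotient.mk (Ideal.span {e1 ^ m}) u := by
    intro f u hu
    have : u = ψ f := Subtype.ext hu
    rw [this]
    rfl
  refine ⟨iso, hiso _ _ ?_, fun u hu => hiso _ _ ?_, fun c hc2 hc u hu => hiso _ _ ?_,
    fun u hu => hiso _ _ ?_⟩
  · rw [he1, presMap_zero]
  · rw [hu, presMap_one hn]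
  · rw [hu]; exact (presMap_of_two_le hc2 hc).symm
  · rw [hu, presMap_last]
end

section
/- Let r ≥ 1 and let M = ℤ^{2r}/ℤ·(1,1,…,1) be the quotient of the free abelian group on e₁, …, e_{2r} by the subgroup generated by e₁ + e₂ + ⋯ + e_{2r}; write ē_i for the image of e_i. Let τ : M → M be the involution induced by e_i ↦ −e_{2r+1−i}. Then the quotient group M^τ/(1+τ)M, where M^τ = {v ∈ M : τ(v) = v} and (1+τ)M = {v + τ(v) : v ∈ M}, is cyclic of order 2, generated by the class of ē₁ + ē₂ + ⋯ + ē_r. -/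
/-- Two integer vectors agree modulo the constant vectors iff they differ by a constant. -/
lemma quotient_mk_eq_mk_iff_exists_add_const {ι : Type*} (x y : ι → ℤ) :
    (Submodule.Quotient.mk x : (ι → ℤ) ⧸ Submodule.span ℤ {(fun _ => 1 : ι → ℤ)}) =
      Submodule.Quotient.mk y ↔ ∃ c : ℤ, ∀ i, x i = y i + c := by
  rw [Submodule.Quotient.eq, Submodule.mem_span_singleton]
  refine exists_congr fun c => ?_
  rw [funext_iff]
  refine forall_congr' fun i => ?_
  simp only [Pi.smul_apply, Pi.sub_apply, smul_eq_mul, mul_one]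
  omega

/-- A vector whose opposite coordinates have constant even sum `2 * k` is, modulo constant
vectors, of the form `v - v ∘ Fin.rev`. -/
lemma exists_eq_sub_rev_add_const {r : ℕ} {x : Fin (2 * r) → ℤ} {k : ℤ}
    (hx : ∀ i, x i + x i.rev = 2 * k) :
    ∃ v : Fin (2 * r) → ℤ, ∀ i, x i = v i + -v i.rev + k := by
  refine ⟨fun i => if (i : ℕ) < r then x i - k else 0, fun i => ?_⟩
  have hi := hx i
  have hrev := Fin.val_rev i
  dsimp only
  split_ifs <;> omega

/-- Let `r ≥ 1` and let `M = ℤ^{2r}/ℤ·(1,…,1)`. Let `τ : M → M` be the involution induced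
by `eᵢ ↦ −e_{2r+1−i}` (in `Fin (2*r)`-indexed coordinates, `v ↦ fun i => -v i.rev`). Then
the quotient group `M^τ/(1+τ)M` is cyclic of order 2, generated by the class of
`ē₁ + ē₂ + ⋯ + ē_r`; concretely: the class `w` of the indicator vector of the first `r`
coordinates is `τ`-invariant, `w` is not of the form `v + τ v`, and every `τ`-invariant
element of `M` is, modulo the subgroup `{v + τ v}`, equal to `0` or to `w`. -/
theorem fixedPoints_mod_norms_cyclic_of_order_two
    (r : ℕ) (hr : 1 ≤ r)
    (τ : ((Fin (2 * r) → ℤ) ⧸ Submodule.span ℤ {(fun _ => 1 : Fin (2 * r) → ℤ)}) →+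
         ((Fin (2 * r) → ℤ) ⧸ Submodule.span ℤ {(fun _ => 1 : Fin (2 * r) → ℤ)}))
    (hτ : ∀ v : Fin (2 * r) → ℤ,
      τ (Submodule.Quotient.mk v) = Submodule.Quotient.mk (fun i => - v i.rev)) :
    (τ (Submodule.Quotient.mk (fun i : Fin (2 * r) => if (i : ℕ) < r then (1 : ℤ) else 0)) =
       Submodule.Quotient.mk (fun i : Fin (2 * r) => if (i : ℕ) < r then (1 : ℤ) else 0)) ∧
    (¬ ∃ v, v + τ v =
       (Submodule.Quotient.mk (fun i : Fin (2 * r) => if (i : ℕ) < r then (1 : ℤ) else 0) :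
          (Fin (2 * r) → ℤ) ⧸ Submodule.span ℤ {(fun _ => 1 : Fin (2 * r) → ℤ)})) ∧
    (∀ u, τ u = u →
      (∃ v, u = v + τ v) ∨
      ∃ v, u - (Submodule.Quotient.mk (fun i : Fin (2 * r) =>
            if (i : ℕ) < r then (1 : ℤ) else 0) :
          (Fin (2 * r) → ℤ) ⧸ Submodule.span ℤ {(fun _ => 1 : Fin (2 * r) → ℤ)}) =
        v + τ v) := by
  have hw (i : Fin (2 * r)) : (if (i : ℕ) < r then (1 : ℤ) else 0) +
      (if (i.rev : ℕ) < r then (1 : ℤ) else 0) = 1 := by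
    have hrev := Fin.val_rev i
    split_ifs <;> omega
  have norm_of_even (x : Fin (2 * r) → ℤ) (k : ℤ) (hx : ∀ i, x i + x i.rev = 2 * k) :
      ∃ v, (Submodule.Quotient.mk x :
        (Fin (2 * r) → ℤ) ⧸ Submodule.span ℤ {(fun _ => 1 : Fin (2 * r) → ℤ)}) = v + τ v := by
    obtain ⟨v, hv⟩ := exists_eq_sub_rev_add_const hx
    refine ⟨Submodule.Quotient.mk v, ?_⟩
    rw [hτ, ← Submodule.Quotient.mk_add, quotient_mk_eq_mk_iff_exists_add_const]
    exact ⟨k, hv⟩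
  refine ⟨?_, ?_, ?_⟩
  · rw [hτ, quotient_mk_eq_mk_iff_exists_add_const]
    exact ⟨-1, fun i => by linarith [hw i]⟩
  · rintro ⟨v, hv⟩
    obtain ⟨v, rfl⟩ := Submodule.Quotient.mk_surjective _ v
    rw [hτ, ← Submodule.Quotient.mk_add, quotient_mk_eq_mk_iff_exists_add_const] at hv
    obtain ⟨c, hc⟩ := hv
    let i : Fin (2 * r) := ⟨0, by omega⟩
    have hi := hc i
    have hi' := hc i.rev
    simp only [Pi.add_apply, Fin.rev_rev] at hi hi'
    have := hw i
    omega
  · intro u hu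
    obtain ⟨x, rfl⟩ := Submodule.Quotient.mk_surjective _ u
    rw [hτ, quotient_mk_eq_mk_iff_exists_add_const] at hu
    obtain ⟨c, hc⟩ := hu
    obtain ⟨k, hk⟩ | ⟨k, hk⟩ := Int.even_or_odd c
    · exact Or.inl (norm_of_even x (-k) fun i => by linarith [hc i])
    · right
      rw [← Submodule.Quotient.mk_sub]
      refine norm_of_even _ (-k - 1) fun i => ?_
      simp only [Pi.sub_apply]
      linarith [hc i, hw i]
end
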